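/- For every dimension N ≥ 1, every degree k ∈ ℕ, every s ∈ {1, …, k+1}, every exponent p ∈ [1, +∞), and every ϱ > 0, there exists a constant C > 0 depending only on N, ϱ, k, s and p such that: for every nondegenerate simplex T ⊆ ℝ^N with diameter h_T and inradius r_T satisfying ϱ·h_T ≤ r_T, every function v smooth on an open neighbourhood of the closure of T, and every m ∈ {0, …, s−1}, one has h_T^{1/p} · ‖ x ↦ ‖D^m(v − π_T^k v)(x)‖ ‖_{L^p(∂T, μ)} ≤ C · h_T^{s−m} · |v|_{W^{s,p}(T)}, where π_T^k v is the L^2-projection of v onto polynomials of total degree at most k and μ is the (N−1)-dimensional Hausdorff measure on the topological boundary ∂T. -/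

import Mathlib

open MeasureTheory Metric
open scoped ENNReal

noncomputable section

/-- `w : ℝ^N → ℝ` is (given by) a multivariate polynomial of total degree at most `k`. -/
def IsPolyDegLE (N k : ℕ) (w : EuclideanSpace ℝ (Fin N) → ℝ) : Prop :=
  ∃ P : MvPolynomial (Fin N) ℝ, P.totalDegree ≤ k ∧ ∀ x, w x = MvPolynomial.eval (fun i => x i) P

/-- The `W^{s,p}(U)`-seminorm of `v`: the `L^p(U)`-norm of the norm of the `s`-th iterated
derivative. -/
def sobSemi {N : ℕ} (s : ℕ) (p : ℝ≥0∞) (U : Set (EuclideanSpace ℝ (Fin N)))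
    (v : EuclideanSpace ℝ (Fin N) → ℝ) : ℝ≥0∞ :=
  eLpNorm (fun x => ‖iteratedFDeriv ℝ s v x‖) p (volume.restrict U)

open scoped NNReal


/-- Behaviour of Hausdorff measures under Lipschitz maps, at the level of restricted measures. -/
lemma hausdorff_restrict_image_le {X Y : Type*} [MetricSpace X] [MetricSpace Y]
    [MeasurableSpace X] [BorelSpace X] [MeasurableSpace Y] [BorelSpace Y]
    {K : ℝ≥0} {φ : X → Y} (hφ : LipschitzWith K φ) {d : ℝ} (hd : 0 ≤ d) (S : Set X)
    (R : Set Y) (hR : R ⊆ φ '' S) :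
    (μH[d] : Measure Y).restrict R ≤ ((K : ℝ≥0∞) ^ d) • ((μH[d] : Measure X).restrict S).map φ := by
  refine Measure.le_iff.2 fun B hB => ?_
  have hm : Measurable φ := hφ.continuous.measurable
  rw [Measure.restrict_apply hB, Measure.smul_apply, Measure.map_apply hm hB,
    Measure.restrict_apply (hm hB)]
  have h1 : B ∩ R ⊆ φ '' (φ ⁻¹' B ∩ S) := by
    rintro y ⟨hy, hyR⟩
    obtain ⟨x, hx, rfl⟩ := hR hyR
    exact ⟨x, ⟨hy, hx⟩, rfl⟩
  exact (measure_mono h1).trans (hφ.hausdorffMeasure_image_le hd _)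

lemma lintegral_rpow_le_of_le_one {α : Type*} [MeasurableSpace α] {μ : Measure α}
    (hμ : μ Set.univ ≤ 1) {q : ℝ} (hq : 1 ≤ q) {f : α → ℝ≥0∞} (hf : AEMeasurable f μ) :
    (∫⁻ x, f x ∂μ) ^ q ≤ ∫⁻ x, f x ^ q ∂μ := by
  have hq0 : 0 < q := by linarith
  rcases eq_or_lt_of_le hq with h1 | h1
  · subst h1; simp
  have hpq := Real.HolderConjugate.conjExponent h1
  have := ENNReal.lintegral_mul_le_Lp_mul_Lq μ hpq hf (aemeasurable_const (b := (1 : ℝ≥0∞)))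
  simp only [Pi.mul_apply, mul_one, ENNReal.one_rpow, lintegral_const, one_mul] at this
  have h2 : (∫⁻ x, f x ∂μ) ≤ (∫⁻ x, f x ^ q ∂μ) ^ (1 / q) := by
    refine this.trans ?_
    conv_rhs => rw [← mul_one ((∫⁻ x, f x ^ q ∂μ) ^ (1 / q))]
    gcongr
    exact ENNReal.rpow_le_one hμ (by have := hpq.symm.pos; positivity)
  calc _ ≤ ((∫⁻ x, f x ^ q ∂μ) ^ (1 / q)) ^ q := by gcongr
    _ = _ := by rw [← ENNReal.rpow_mul]; simp [hq0.ne']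

lemma oneD_bound {F : Type*} [NormedAddCommGroup F] [NormedSpace ℝ F] [CompleteSpace F]
    {f f' : ℝ → F} (hf : ∀ x, HasDerivAt f (f' x) x) (hc : Continuous f')
    {q : ℝ} (hq : 1 ≤ q) {a b : ℝ} (hab : b - a ≤ 1) {s t : ℝ}
    (hs : s ∈ Set.Icc a b) (ht : t ∈ Set.Icc a b) :
    ‖f s - f t‖ₑ ^ q ≤ ∫⁻ x in Set.Icc a b, ‖f' x‖ₑ ^ q := by
  have h1 : f s - f t = ∫ x in t..s, f' x :=
    (intervalIntegral.integral_eq_sub_of_hasDerivAt (fun x _ => hf x)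
      (hc.intervalIntegrable _ _)).symm
  have h2 : ‖f s - f t‖ₑ ≤ ∫⁻ x in Set.Icc a b, ‖f' x‖ₑ := by
    rw [h1]
    have : ‖∫ x in t..s, f' x‖ₑ ≤ ∫⁻ x in Set.uIoc t s, ‖f' x‖ₑ := by
      rw [← ofReal_norm, intervalIntegral.norm_intervalIntegral_eq,
        ofReal_norm]
      exact enorm_integral_le_lintegral_enorm _
    refine this.trans (lintegral_mono_set ?_)
    refine Set.uIoc_subset_uIcc.trans ?_
    exact Set.uIcc_subset_Icc ht hs
  refine (ENNReal.rpow_le_rpow h2 (by linarith)).trans ?_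
  refine lintegral_rpow_le_of_le_one ?_ hq ?_
  · simp; linarith
  · exact hc.enorm.measurable.aemeasurable

section
variable {E : Type*} [NormedAddCommGroup E] [NormedSpace ℝ E] [FiniteDimensional ℝ E]
  [MeasurableSpace E] [BorelSpace E] (μ : Measure E) [μ.IsAddHaarMeasure]

lemma lintegral_affine_le {G : E → ℝ≥0∞} (hG : Measurable G) (c : E) {r : ℝ} (hr : 1 / 2 ≤ r) :
    ∫⁻ x, G (c + r • x) ∂μ ≤ 2 ^ (Module.finrank ℝ E) * ∫⁻ x, G x ∂μ := by
  have hr0 : 0 < r := by linarith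
  have h1 : ∫⁻ x, G (c + r • x) ∂μ = ∫⁻ x, G (c + x) ∂(μ.map (r • ·)) := by
    rw [lintegral_map (f := fun x => G (c + x)) (by fun_prop) (by fun_prop)]
  rw [h1, Measure.map_addHaar_smul μ hr0.ne', lintegral_smul_measure, lintegral_add_left_eq_self,
    smul_eq_mul]
  gcongr
  rw [abs_of_pos (by positivity)]
  have : (2 : ℝ≥0∞) ^ (Module.finrank ℝ E) = ENNReal.ofReal (2 ^ (Module.finrank ℝ E)) := by
    rw [ENNReal.ofReal_pow (by norm_num)]; simp
  rw [this]
  apply ENNReal.ofReal_le_ofReal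
  rw [← inv_pow]
  gcongr
  rw [inv_le_comm₀ hr0 (by norm_num)]; linarith

lemma poincare_point {F : Type*} [NormedAddCommGroup F] [NormedSpace ℝ F] [CompleteSpace F]
    {T : Set E} (hTo : IsOpen T) (hTc : Convex ℝ T) (hTb : Bornology.IsBounded T)
    (hTn : T.Nonempty) {q : ℝ} (hq : 1 ≤ q) :
    ∃ C : ℝ≥0∞, C ≠ ⊤ ∧ ∀ g : E → F, ContDiff ℝ 1 g → ∃ y ∈ T,
      ∫⁻ x in T, ‖g x - g y‖ₑ ^ q ∂μ ≤ C * ∫⁻ x in T, ‖fderiv ℝ g x‖ₑ ^ q ∂μ := by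
  have hq0 : 0 ≤ q := by linarith
  have hTm : MeasurableSet T := hTo.measurableSet
  have hT0 : μ T ≠ 0 := (hTo.measure_pos μ hTn).ne'
  have hTt : μ T ≠ ⊤ := hTb.measure_lt_top.ne
  set D := Metric.ediam T with hD
  have hDt : D ≠ ⊤ := hTb.ediam_ne_top
  refine ⟨D ^ q * 2 ^ (Module.finrank ℝ E), by finiteness, fun g hg => ?_⟩
  set G : E → ℝ≥0∞ := T.indicator (fun x => ‖fderiv ℝ g x‖ₑ ^ q) with hGdef
  have hgc : Continuous (fderiv ℝ g) := hg.continuous_fderiv one_ne_zero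
  have hGm : Measurable G := (hgc.enorm.measurable.pow_const q).indicator hTm
  set I := ∫⁻ x in T, ‖fderiv ℝ g x‖ₑ ^ q ∂μ with hI
  have hGI : ∫⁻ x, G x ∂μ = I := lintegral_indicator hTm _
  -- fixed time bound
  have hfix : ∀ t ∈ Set.Icc (0 : ℝ) 1, ∫⁻ y in T, ∫⁻ x in T, G (y + t • (x - y)) ∂μ ∂μ
      ≤ 2 ^ (Module.finrank ℝ E) * μ T * I := by
    intro t ht
    rcases le_total t (1 / 2) with h | h
    · rw [lintegral_lintegral_swap (by fun_prop)]
      calc _ ≤ ∫⁻ x in T, 2 ^ (Module.finrank ℝ E) * I ∂μ := by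
            refine lintegral_mono fun x => ?_
            refine (setLIntegral_le_lintegral _ _).trans ?_
            have := lintegral_affine_le μ hGm (t • x) (r := 1 - t) (by linarith)
            rw [hGI] at this
            refine le_trans (le_of_eq ?_) this
            congr 1; ext y; congr 1; module
        _ = _ := by rw [setLIntegral_const]; ring
    · calc _ ≤ ∫⁻ y in T, 2 ^ (Module.finrank ℝ E) * I ∂μ := by
            refine lintegral_mono fun y => ?_
            refine (setLIntegral_le_lintegral _ _).trans ?_
            have := lintegral_affine_le μ hGm ((1 - t) • y) (r := t) h
            rw [hGI] at this
            refine le_trans (le_of_eq ?_) this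
            congr 1; ext x; congr 1; module
        _ = _ := by rw [setLIntegral_const]; ring
  have hpt : ∀ y ∈ T, ∀ x ∈ T, ‖g x - g y‖ₑ ^ q
      ≤ D ^ q * ∫⁻ t in Set.Icc (0 : ℝ) 1, G (y + t • (x - y)) := by
    intro y hy x hx
    have h1 : ∀ t : ℝ, HasDerivAt (fun t : ℝ => g (y + t • (x - y)))
        (fderiv ℝ g (y + t • (x - y)) (x - y)) t := by
      intro t
      have ha : HasDerivAt (fun t : ℝ => y + t • (x - y)) (x - y) t := by
        simpa using ((hasDerivAt_id t).smul_const (x - y)).const_add y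
      exact ((hg.differentiable one_ne_zero) _).hasFDerivAt.comp_hasDerivAt t ha
    have h2 := oneD_bound h1 (by fun_prop) hq (a := 0) (b := 1) (by norm_num) (s := 1) (t := 0)
      (by simp) (by simp)
    simp only [one_smul, add_sub_cancel, zero_smul, add_zero] at h2
    refine h2.trans ?_
    rw [← lintegral_const_mul _ (by fun_prop)]
    refine setLIntegral_mono (by fun_prop) fun t ht => ?_
    have hmem : y + t • (x - y) ∈ T := by
      have := hTc.add_smul_sub_mem hy hx ht
      exact this
    rw [hGdef, Set.indicator_of_mem hmem, ← ENNReal.mul_rpow_of_nonneg _ _ hq0, mul_comm D]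
    gcongr
    refine (ContinuousLinearMap.le_opENorm _ _).trans ?_
    gcongr
    rw [← edist_eq_enorm_sub]
    exact Metric.edist_le_ediam_of_mem hx hy
  have hmain : ∫⁻ y in T, ∫⁻ x in T, ‖g x - g y‖ₑ ^ q ∂μ ∂μ
      ≤ D ^ q * (2 ^ (Module.finrank ℝ E) * μ T * I) := by
    calc _ ≤ ∫⁻ y in T, D ^ q * ∫⁻ t in Set.Icc (0 : ℝ) 1, ∫⁻ x in T, G (y + t • (x - y)) ∂μ ∂volume ∂μ := by
          refine setLIntegral_mono' hTm fun y hy => ?_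
          rw [lintegral_lintegral_swap (by fun_prop), ← lintegral_const_mul]
          · exact setLIntegral_mono' hTm fun x hx => hpt y hy x hx
          · exact Measurable.lintegral_prod_right' (f := fun p : E × ℝ => G (y + p.2 • (p.1 - y)))
              (by fun_prop)
      _ = D ^ q * ∫⁻ t in Set.Icc (0 : ℝ) 1, ∫⁻ y in T, ∫⁻ x in T, G (y + t • (x - y)) ∂μ ∂μ := by
          rw [lintegral_const_mul' _ _ (by finiteness), lintegral_lintegral_swap]
          refine Measurable.aemeasurable ?_
          exact Measurable.lintegral_prod_right'
            (f := fun p : (E × ℝ) × E => G (p.1.1 + p.1.2 • (p.2 - p.1.1))) (by fun_prop)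
      _ ≤ D ^ q * ∫⁻ t in Set.Icc (0 : ℝ) 1, (2 ^ (Module.finrank ℝ E) * μ T * I) := by
          refine mul_le_mul_right ?_ _
          exact setLIntegral_mono' measurableSet_Icc fun t ht => hfix t ht
      _ = _ := by simp
  have hgcont : Continuous g := hg.continuous
  obtain ⟨y, hy, hle⟩ := exists_le_setLAverage (μ := μ) (s := T)
    (f := fun y => ∫⁻ x in T, ‖g x - g y‖ₑ ^ q ∂μ) hT0 hTt (by
      refine Measurable.aemeasurable ?_
      have : Measurable (fun p : E × E => ‖g p.2 - g p.1‖ₑ ^ q) := by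
        have : Continuous (fun p : E × E => g p.2 - g p.1) := by fun_prop
        exact this.enorm.measurable.pow_const q
      exact Measurable.lintegral_prod_right' this)
  refine ⟨y, hy, hle.trans ?_⟩
  rw [setLAverage_eq]
  refine ENNReal.div_le_of_le_mul (hmain.trans (le_of_eq ?_))
  ring
end


lemma fderiv_iteratedFDeriv_eval {E F : Type*} [NormedAddCommGroup E] [NormedSpace ℝ E]
    [NormedAddCommGroup F] [NormedSpace ℝ F] {u : E → F} (hu : ContDiff ℝ (⊤ : ℕ∞) u) (n : ℕ) (x a : E)
    (w : Fin n → E) :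
    fderiv ℝ (iteratedFDeriv ℝ n u) x a w = fderiv ℝ (fun y => iteratedFDeriv ℝ n u y w) x a := by
  have hd : DifferentiableAt ℝ (iteratedFDeriv ℝ n u) x :=
    (hu.differentiable_iteratedFDeriv (by exact_mod_cast ENat.natCast_lt_top n)) x
  have := ((ContinuousMultilinearMap.apply ℝ (fun _ : Fin n => E) F w).hasFDerivAt.comp x
    hd.hasFDerivAt).fderiv
  have h2 : (fun y => iteratedFDeriv ℝ n u y w) =
    (ContinuousMultilinearMap.apply ℝ (fun _ : Fin n => E) F w) ∘ (iteratedFDeriv ℝ n u) := by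
    ext; simp
  rw [h2, this]; simp

lemma fderiv_clm_eval {E F G : Type*} [NormedAddCommGroup E] [NormedSpace ℝ E]
    [NormedAddCommGroup F] [NormedSpace ℝ F] [NormedAddCommGroup G] [NormedSpace ℝ G]
    (L : G →L[ℝ] F) {g : E → E →L[ℝ] G} {x : E} (hg : DifferentiableAt ℝ g x) (a b : E) :
    fderiv ℝ (fun y => L (g y b)) x a = L (fderiv ℝ g x a b) := by
  have h := L.hasFDerivAt.comp x (hg.hasFDerivAt.clm_apply (hasFDerivAt_const b x))
  have h2 := h.fderiv
  change fderiv ℝ (fun y => L (g y b)) x = _ at h2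
  rw [h2]; simp

lemma iteratedFDeriv_swap_adj {E F : Type*} [NormedAddCommGroup E] [NormedSpace ℝ E]
    [NormedAddCommGroup F] [NormedSpace ℝ F] {u : E → F} (hu : ContDiff ℝ (⊤ : ℕ∞) u) :
    ∀ (n : ℕ) (i : Fin n) (x : E) (v : Fin (n + 1) → E),
    iteratedFDeriv ℝ (n + 1) u x (v ∘ Equiv.swap i.castSucc i.succ) = iteratedFDeriv ℝ (n + 1) u x v := by
  intro n
  induction n with
  | zero => intro i; exact i.elim0
  | succ n ih =>
    intro i x v
    rw [iteratedFDeriv_succ_apply_left, iteratedFDeriv_succ_apply_left]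
    refine Fin.cases ?_ (fun j => ?_) i
    · have key : ∀ a b : E, ∀ w : Fin n → E,
          fderiv ℝ (iteratedFDeriv ℝ (n + 1) u) x a (Fin.cons b w) =
          (fderiv ℝ (fderiv ℝ (iteratedFDeriv ℝ n u)) x a b) w := by
        intro a b w
        rw [fderiv_iteratedFDeriv_eval hu]
        simp_rw [iteratedFDeriv_succ_apply_left, Fin.cons_zero, Fin.tail_cons]
        have hc : ContDiff ℝ (⊤ : ℕ∞) (iteratedFDeriv ℝ n u) := by
          exact hu.iteratedFDeriv_right (by norm_cast)
        have hd : DifferentiableAt ℝ (fderiv ℝ (iteratedFDeriv ℝ n u)) x :=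
          (hc.fderiv_right (m := 1) (by norm_cast)).differentiable one_ne_zero x
        have := fderiv_clm_eval (ContinuousMultilinearMap.apply ℝ (fun _ : Fin n => E) F w) hd a b
        simpa using this
      have hv : ∀ w : Fin (n + 2) → E, Fin.tail w = Fin.cons (w 1) (Fin.tail (Fin.tail w)) := by
        intro w; exact (Fin.cons_self_tail (Fin.tail w)).symm
      rw [hv v, hv (v ∘ _), key, key]
      have hc : ContDiff ℝ (⊤ : ℕ∞) (iteratedFDeriv ℝ n u) := hu.iteratedFDeriv_right (by norm_cast)
      have hsym : IsSymmSndFDerivAt ℝ (iteratedFDeriv ℝ n u) x := by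
        refine hc.contDiffAt.isSymmSndFDerivAt ?_
        simp only [minSmoothness_of_isRCLikeNormedField]
        exact WithTop.coe_le_coe.2 (le_top : (2 : ℕ∞) ≤ ⊤)
      have e0 : (v ∘ (Equiv.swap (Fin.castSucc (0 : Fin (n + 1))) (Fin.succ 0))) 0 = v 1 := by
        simp
      have e1 : (v ∘ (Equiv.swap (Fin.castSucc (0 : Fin (n + 1))) (Fin.succ 0))) 1 = v 0 := by
        simp
      have e2 : Fin.tail (Fin.tail (v ∘ (Equiv.swap (Fin.castSucc (0 : Fin (n + 1))) (Fin.succ 0)))) =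
          Fin.tail (Fin.tail v) := by
        ext l
        simp only [Fin.tail, Function.comp]
        rw [Equiv.swap_apply_of_ne_of_ne]
        · exact Fin.succ_ne_zero _
        · intro h; exact Fin.succ_ne_zero _ (Fin.succ_injective _ h)
      rw [e0, e1, e2, hsym.eq]
    · have e0 : (v ∘ (Equiv.swap j.succ.castSucc j.succ.succ)) 0 = v 0 := by
        simp only [Function.comp]
        rw [Equiv.swap_apply_of_ne_of_ne]
        · rw [Fin.castSucc_succ]; exact (Fin.succ_ne_zero _).symm
        · exact (Fin.succ_ne_zero _).symm
      have e1 : Fin.tail (v ∘ (Equiv.swap j.succ.castSucc j.succ.succ)) =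
          Fin.tail v ∘ (Equiv.swap j.castSucc j.succ) := by
        ext l
        simp only [Fin.tail, Function.comp, Fin.castSucc_succ]
        congr 1
        exact (Fin.succ_injective _).swap_apply _ _ _
      rw [e0, e1, fderiv_iteratedFDeriv_eval hu, fderiv_iteratedFDeriv_eval hu]
      simp_rw [ih]

lemma iteratedFDeriv_perm_smooth {E F : Type*} [NormedAddCommGroup E] [NormedSpace ℝ E]
    [NormedAddCommGroup F] [NormedSpace ℝ F] {u : E → F} (hu : ContDiff ℝ (⊤ : ℕ∞) u)
    (n : ℕ) (x : E) (σ : Equiv.Perm (Fin n)) (v : Fin n → E) :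
    iteratedFDeriv ℝ n u x (v ∘ σ) = iteratedFDeriv ℝ n u x v := by
  cases n with
  | zero => congr 1; exact Subsingleton.elim _ _
  | succ n =>
    have hσ : σ ∈ Submonoid.closure (Set.range fun i : Fin n => Equiv.swap i.castSucc i.succ) := by
      rw [Equiv.Perm.mclosure_swap_castSucc_succ]; trivial
    induction hσ using Submonoid.closure_induction generalizing v with
    | mem y hy => obtain ⟨i, rfl⟩ := hy; exact iteratedFDeriv_swap_adj hu n i x v
    | one => rfl
    | mul y z _ _ h1 h2 =>
      rw [Equiv.Perm.coe_mul, ← Function.comp_assoc, h2, h1]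

abbrev EN (N : ℕ) := EuclideanSpace ℝ (Fin N)

namespace IsPolyDegLE

lemma add {N k : ℕ} {w z : EN N → ℝ} (hw : IsPolyDegLE N k w) (hz : IsPolyDegLE N k z) :
    IsPolyDegLE N k (fun x => w x + z x) := by
  obtain ⟨P, hP, h1⟩ := hw
  obtain ⟨Q, hQ, h2⟩ := hz
  exact ⟨P + Q, (MvPolynomial.totalDegree_add _ _).trans (max_le hP hQ), fun x => by simp [h1, h2]⟩

lemma const_mul {N k : ℕ} {w : EN N → ℝ} (hw : IsPolyDegLE N k w) (c : ℝ) :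
    IsPolyDegLE N k (fun x => c * w x) := by
  obtain ⟨P, hP, h1⟩ := hw
  refine ⟨c • P, (MvPolynomial.totalDegree_smul_le _ _).trans hP, fun x => by simp [h1]⟩

lemma sub {N k : ℕ} {w z : EN N → ℝ} (hw : IsPolyDegLE N k w) (hz : IsPolyDegLE N k z) :
    IsPolyDegLE N k (fun x => w x - z x) := by
  obtain ⟨P, hP, h1⟩ := hw
  obtain ⟨Q, hQ, h2⟩ := hz
  exact ⟨P - Q, (MvPolynomial.totalDegree_sub _ _).trans (max_le hP hQ), fun x => by simp [h1, h2]⟩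

lemma mono {N k l : ℕ} {w : EN N → ℝ} (hw : IsPolyDegLE N k w) (h : k ≤ l) :
    IsPolyDegLE N l w := by
  obtain ⟨P, hP, h1⟩ := hw
  exact ⟨P, hP.trans h, h1⟩

lemma zero (N k : ℕ) : IsPolyDegLE N k (fun _ => 0) := ⟨0, by simp, by simp⟩

lemma analytic {N k : ℕ} {w : EN N → ℝ} (hw : IsPolyDegLE N k w) :
    AnalyticOnNhd ℝ w Set.univ := by
  obtain ⟨P, -, h1⟩ := hw
  have : w = fun x => MvPolynomial.aeval (fun i => x i) P := by
    ext x; rw [h1 x, MvPolynomial.aeval_eq_eval]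
  rw [this]
  refine AnalyticOnNhd.aeval_mvPolynomial (fun i => ?_) P
  exact fun x _ => (EuclideanSpace.proj (𝕜 := ℝ) i).analyticAt x

lemma contDiff {N k : ℕ} {w : EN N → ℝ} (hw : IsPolyDegLE N k w) :
    ContDiff ℝ (⊤ : ℕ∞) w := by
  have := hw.analytic
  exact (this.contDiff (n := (⊤ : ℕ∞)))

lemma diag {N s : ℕ} (M : ContinuousMultilinearMap ℝ (fun _ : Fin s => EN N) ℝ) :
    IsPolyDegLE N s (fun x => M (fun _ => x)) := by
  classical
  refine ⟨∑ r : Fin s → Fin N, MvPolynomial.C (M (fun j => EuclideanSpace.single (r j) (1 : ℝ))) *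
    ∏ j, MvPolynomial.X (r j), ?_, fun x => ?_⟩
  · refine MvPolynomial.totalDegree_finsetSum_le fun r _ => ?_
    refine (MvPolynomial.totalDegree_mul _ _).trans ?_
    rw [MvPolynomial.totalDegree_C, zero_add]
    refine (MvPolynomial.totalDegree_finsetProd _ _).trans ?_
    simp
  · have hx : ∀ _ : Fin s, x = ∑ i : Fin N, x i • EuclideanSpace.single i (1 : ℝ) := by
      intro _
      ext l
      simp [Finset.sum_apply, Pi.single_apply]
    have h1 : M (fun _ => x) = M (fun _ => ∑ i : Fin N, x i • EuclideanSpace.single i (1 : ℝ)) := by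
      congr 1; ext1 j; exact hx j
    beta_reduce
    rw [h1, M.map_sum]
    simp only [map_sum, map_mul, MvPolynomial.eval_C, map_prod, MvPolynomial.eval_X]
    refine Finset.sum_congr rfl fun r _ => ?_
    rw [M.map_smul_univ (fun j => x (r j)) (fun j => EuclideanSpace.single (r j) (1 : ℝ)),
      smul_eq_mul, mul_comm]

lemma comp_affine {N k : ℕ} {w : EN N → ℝ} (hw : IsPolyDegLE N k w) (c : EN N)
    (L : EN N →L[ℝ] EN N) : IsPolyDegLE N k (fun x => w (c + L x)) := by
  classical
  obtain ⟨P, hP, h1⟩ := hw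
  let g : Fin N → MvPolynomial (Fin N) ℝ := fun i =>
    MvPolynomial.C (c i) + ∑ j, MvPolynomial.C (L (EuclideanSpace.single j (1 : ℝ)) i) * MvPolynomial.X j
  have hg : ∀ i, (g i).totalDegree ≤ 1 := by
    intro i
    refine (MvPolynomial.totalDegree_add _ _).trans (max_le (by simp) ?_)
    refine MvPolynomial.totalDegree_finsetSum_le fun j _ => ?_
    refine (MvPolynomial.totalDegree_mul _ _).trans ?_
    simp
  have hge : ∀ i (x : EN N), MvPolynomial.eval (fun i => x i) (g i) = (c + L x) i := by
    intro i x
    have hx : x = ∑ i : Fin N, x i • EuclideanSpace.single i (1 : ℝ) := by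
      ext l
      simp [Finset.sum_apply, Pi.single_apply]
    have : L x = ∑ i : Fin N, x i • L (EuclideanSpace.single i (1 : ℝ)) := by
      conv_lhs => rw [hx]
      simp
    rw [this]
    simp [g, mul_comm]
  refine ⟨MvPolynomial.aeval g P, ?_, fun x => ?_⟩
  · rw [MvPolynomial.aeval_def, MvPolynomial.eval₂_eq]
    refine MvPolynomial.totalDegree_finsetSum_le fun d hd => ?_
    refine (MvPolynomial.totalDegree_mul _ _).trans ?_
    rw [MvPolynomial.algebraMap_eq, MvPolynomial.totalDegree_C, zero_add]
    refine (MvPolynomial.totalDegree_finsetProd _ _).trans ?_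
    refine le_trans ?_ ((MvPolynomial.le_totalDegree hd).trans hP)
    rw [Finsupp.sum]
    refine Finset.sum_le_sum fun i _ => ?_
    refine (MvPolynomial.totalDegree_pow _ _).trans ?_
    simpa using Nat.mul_le_mul_left (d i) (hg i)
  · beta_reduce
    rw [h1]
    have := MvPolynomial.eval₂Hom_bind₁ (RingHom.id ℝ) (fun i => x i) g P
    rw [show MvPolynomial.aeval g P = MvPolynomial.bind₁ g P from rfl]
    change _ = MvPolynomial.eval₂Hom (RingHom.id ℝ) (fun i => x i) (MvPolynomial.bind₁ g P)
    rw [this]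
    change _ = MvPolynomial.eval _ P
    congr 2
    ext i
    exact (hge i x).symm

end IsPolyDegLE

lemma bramble_hilbert {N : ℕ} {T : Set (EN N)} (hTo : IsOpen T) (hTc : Convex ℝ T)
    (hTb : Bornology.IsBounded T) (hTn : T.Nonempty) {q : ℝ} (hq : 1 ≤ q) (s : ℕ) :
    ∃ C : ℝ≥0∞, C ≠ ⊤ ∧ ∀ u : EN N → ℝ, ContDiff ℝ (⊤ : ℕ∞) u → ∃ Q : EN N → ℝ,
      IsPolyDegLE N (s - 1) Q ∧ (∀ x, iteratedFDeriv ℝ s Q x = 0) ∧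
      ∀ j ≤ s, ∫⁻ x in T, ‖iteratedFDeriv ℝ j (fun y => u y - Q y) x‖ₑ ^ q ≤
        C * ∫⁻ x in T, ‖iteratedFDeriv ℝ s u x‖ₑ ^ q := by
  induction s with
  | zero =>
    refine ⟨1, by simp, fun u hu => ⟨fun _ => 0, IsPolyDegLE.zero _ _, fun x => ?_, fun j hj => ?_⟩⟩
    · ext v; simp
    · obtain rfl : j = 0 := by omega
      simp
  | succ s ih =>
    obtain ⟨C, hC, ih⟩ := ih
    obtain ⟨C', hC', hP⟩ := poincare_point (F := ContinuousMultilinearMap ℝ (fun _ : Fin s => EN N) ℝ)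
      (volume : Measure (EN N)) hTo hTc hTb hTn hq
    refine ⟨1 + C * C', by finiteness, fun u hu => ?_⟩
    have hDu : ContDiff ℝ (⊤ : ℕ∞) (iteratedFDeriv ℝ s u) := hu.iteratedFDeriv_right (by norm_cast)
    obtain ⟨y, hy, hle⟩ := hP (iteratedFDeriv ℝ s u) (hDu.of_le (by norm_cast))
    set M := iteratedFDeriv ℝ s u y with hM
    let Qs : EN N → ℝ := fun x => ((s.factorial : ℝ)⁻¹ • M) (fun _ => x)
    have hQsP : IsPolyDegLE N s Qs := IsPolyDegLE.diag _
    have hQsD : ∀ x, iteratedFDeriv ℝ s Qs x = M := by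
      intro x
      ext v
      rw [ContinuousMultilinearMap.iteratedFDeriv_comp_diagonal]
      have : ∀ σ : Equiv.Perm (Fin s), ((s.factorial : ℝ)⁻¹ • M) (fun i => v (σ i)) =
          (s.factorial : ℝ)⁻¹ * M v := by
        intro σ
        simp only [smul_apply, smul_eq_mul]
        congr 1
        exact iteratedFDeriv_perm_smooth hu s y σ v
      rw [Finset.sum_congr rfl fun σ _ => this σ]
      simp [Fintype.card_perm, Nat.factorial_ne_zero]
    have hQsC := hQsP.contDiff
    obtain ⟨Q', hQ'P, hQ'D, hQ'⟩ := ih (fun x => u x - Qs x) (hu.sub hQsC)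
    have hQ'C := hQ'P.contDiff
    have hsmooth : ∀ {f : EN N → ℝ}, ContDiff ℝ (⊤ : ℕ∞) f → ∀ (n : ℕ) x, ContDiffAt ℝ n f x :=
      fun hf n x => (hf.of_le (by norm_cast; exact le_top)).contDiffAt
    have hsum : ∀ x, iteratedFDeriv ℝ s (fun x => Qs x + Q' x) x = M := by
      intro x
      rw [fun_iteratedFDeriv_add_apply (hsmooth hQsC s x) (hsmooth hQ'C s x), hQsD, hQ'D, add_zero]
    have hzero : ∀ x, iteratedFDeriv ℝ (s + 1) (fun x => Qs x + Q' x) x = 0 := by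
      intro x
      ext v
      have : iteratedFDeriv ℝ s (fun x => Qs x + Q' x) = fun _ => M := funext hsum
      rw [iteratedFDeriv_succ_apply_left, this]
      simp
    refine ⟨fun x => Qs x + Q' x, hQsP.add (hQ'P.mono (by omega)), hzero, fun j hj => ?_⟩
    rcases Nat.lt_or_ge j (s + 1) with h | h
    · have e1 : (fun y => u y - (Qs y + Q' y)) = fun y => u y - Qs y - Q' y := by ext; ring
      rw [e1]
      refine (hQ' j (by omega)).trans ?_
      have e2 : ∀ x, iteratedFDeriv ℝ s (fun x => u x - Qs x) x = iteratedFDeriv ℝ s u x - M := by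
        intro x
        rw [fun_iteratedFDeriv_sub_apply (hsmooth hu s x) (hsmooth hQsC s x), hQsD]
      simp_rw [e2]
      have e3 : ∀ x, ‖fderiv ℝ (iteratedFDeriv ℝ s u) x‖ₑ = ‖iteratedFDeriv ℝ (s + 1) u x‖ₑ := by
        intro x
        rw [← ofReal_norm, norm_fderiv_iteratedFDeriv, ofReal_norm]
      simp_rw [e3] at hle
      calc _ ≤ C * (C' * ∫⁻ x in T, ‖iteratedFDeriv ℝ (s + 1) u x‖ₑ ^ q) := by gcongr
        _ ≤ _ := by rw [← mul_assoc]; gcongr; exact le_add_self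
    · obtain rfl : j = s + 1 := by omega
      have e2 : ∀ x, iteratedFDeriv ℝ (s + 1) (fun x => u x - (Qs x + Q' x)) x =
          iteratedFDeriv ℝ (s + 1) u x := by
        intro x
        rw [fun_iteratedFDeriv_sub_apply (hsmooth hu _ x) (hsmooth (hQsC.add hQ'C) _ x), hzero, sub_zero]
      simp_rw [e2]
      conv_lhs => rw [← one_mul (∫⁻ x in T, _)]
      gcongr
      exact le_self_add

lemma integrableOn_of_bounded {N : ℕ} {T : Set (EN N)} (hTb : Bornology.IsBounded T)
    {f : EN N → ℝ} (hf : Continuous f) : IntegrableOn f T :=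
  (hf.continuousOn.integrableOn_compact hTb.isCompact_closure).mono_set subset_closure

lemma poly_eq_zero_of_integral {N k : ℕ} {T : Set (EN N)} (hTo : IsOpen T)
    (hTb : Bornology.IsBounded T) (hTn : T.Nonempty) {w : EN N → ℝ} (hw : IsPolyDegLE N k w)
    (h : ∫ x in T, w x * w x = 0) : w = 0 := by
  have hc : Continuous w := hw.contDiff.continuous
  have h1 : ∀ᵐ x ∂(volume.restrict T), w x * w x = 0 := by
    have := (setIntegral_eq_zero_iff_of_nonneg_ae (μ := volume) (s := T) (f := fun x => w x * w x)
      (Filter.Eventually.of_forall fun x => mul_self_nonneg _)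
      (integrableOn_of_bounded hTb (hc.mul hc))).1 h
    exact this
  have h2 : Set.EqOn (fun x => w x * w x) (fun _ => 0) T := by
    refine Measure.eqOn_open_of_ae_eq (μ := volume) h1 hTo (hc.mul hc).continuousOn
      continuousOn_const
  obtain ⟨z, hz⟩ := hTn
  refine AnalyticOnNhd.eq_of_eventuallyEq (z₀ := z) hw.analytic
    (fun x _ => analyticAt_const) ?_
  filter_upwards [hTo.mem_nhds hz] with x hx
  simpa using h2 hx

def polySpace (N k : ℕ) : Submodule ℝ (EN N → ℝ) where
  carrier := {w | IsPolyDegLE N k w}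
  add_mem' := fun ha hb => ha.add hb
  zero_mem' := IsPolyDegLE.zero N k
  smul_mem' := fun c _ hx => hx.const_mul c

lemma polySpace_finite (N k : ℕ) : Module.Finite ℝ (polySpace N k) := by
  let Φ : MvPolynomial.restrictTotalDegree (Fin N) ℝ k →ₗ[ℝ] (EN N → ℝ) :=
    { toFun := fun P x => MvPolynomial.eval (fun i => x i) P.1
      map_add' := fun P Q => by ext; simp
      map_smul' := fun c P => by ext; simp }
  have : polySpace N k = LinearMap.range Φ := by
    ext w
    constructor
    · rintro ⟨P, hP, h⟩
      exact ⟨⟨P, (MvPolynomial.mem_restrictTotalDegree _ _ _).2 hP⟩, by ext x; simp [Φ, h]⟩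
    · rintro ⟨P, rfl⟩
      exact ⟨P.1, (MvPolynomial.mem_restrictTotalDegree _ _ _).1 P.2, fun x => rfl⟩
  rw [this]
  infer_instance

lemma projection_stability {N : ℕ} (k m : ℕ) {T : Set (EN N)} (hTo : IsOpen T)
    (hTb : Bornology.IsBounded T) (hTn : T.Nonempty) :
    ∃ C : ℝ≥0∞, C ≠ ⊤ ∧ ∀ w : EN N → ℝ, Continuous w → ∀ R, IsPolyDegLE N k R →
      (∀ q, IsPolyDegLE N k q → ∫ x in T, R x * q x = ∫ x in T, w x * q x) →
      ∀ x ∈ closure T, ‖iteratedFDeriv ℝ m R x‖ₑ ≤ C * ∫⁻ x in T, ‖w x‖ₑ := by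
  have := polySpace_finite N k
  have hcont : ∀ P : polySpace N k, Continuous P.1 := fun P => P.2.contDiff.continuous
  have hintg : ∀ P Q : polySpace N k, IntegrableOn (fun x => P.1 x * Q.1 x) T := fun P Q =>
    integrableOn_of_bounded hTb ((hcont P).mul (hcont Q))
  let B : polySpace N k →ₗ[ℝ] polySpace N k →ₗ[ℝ] ℝ :=
    LinearMap.mk₂ ℝ (fun P Q => ∫ x in T, P.1 x * Q.1 x)
      (fun P P' Q => by
        rw [← integral_add (hintg P Q) (hintg P' Q)]
        congr 1; ext x; simp [add_mul])
      (fun c P Q => by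
        rw [smul_eq_mul, ← integral_const_mul]
        congr 1; ext x; simp [mul_assoc])
      (fun P Q Q' => by
        rw [← integral_add (hintg P Q) (hintg P Q')]
        congr 1; ext x; simp [mul_add])
      (fun c P Q => by
        rw [smul_eq_mul, ← integral_const_mul]
        congr 1; ext x; simp; ring)
  have hBinj : Function.Injective B := by
    rw [injective_iff_map_eq_zero]
    intro P hP
    have : B P P = 0 := by rw [hP]; rfl
    exact Subtype.ext (poly_eq_zero_of_integral hTo hTb hTn P.2 this)
  have hBsurj : Function.Surjective B :=
    (LinearMap.injective_iff_surjective_of_finrank_eq_finrank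
      (Subspace.dual_finrank_eq (K := ℝ) (V := polySpace N k)).symm).1 hBinj
  let b := Module.finBasis ℝ (polySpace N k)
  choose r hr using fun i => hBsurj (b.coord i)
  have hK : IsCompact (closure T) := hTb.isCompact_closure
  -- sup bounds
  have hbd1 : ∀ i, ∃ c : ℝ≥0, ∀ x ∈ closure T, ‖(r i).1 x‖ₑ ≤ c := by
    intro i
    obtain ⟨c, hc⟩ := hK.exists_bound_of_continuousOn (hcont (r i)).continuousOn
    refine ⟨c.toNNReal, fun x hx => ?_⟩
    rw [← ofReal_norm]
    exact ENNReal.ofReal_le_ofReal (hc x hx)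
  have hbd2 : ∀ i, ∃ c : ℝ≥0, ∀ x ∈ closure T, ‖iteratedFDeriv ℝ m (b i).1 x‖ₑ ≤ c := by
    intro i
    have : Continuous (iteratedFDeriv ℝ m (b i).1) :=
      (b i).2.contDiff.continuous_iteratedFDeriv (by norm_cast; exact le_top)
    obtain ⟨c, hc⟩ := hK.exists_bound_of_continuousOn this.continuousOn
    refine ⟨c.toNNReal, fun x hx => ?_⟩
    rw [← ofReal_norm]
    exact ENNReal.ofReal_le_ofReal (hc x hx)
  choose c hc using hbd1
  choose d hd using hbd2
  refine ⟨∑ i, (c i : ℝ≥0∞) * d i, ENNReal.sum_ne_top.2 fun i _ => by finiteness, fun w hw R hR hproj x hx => ?_⟩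
  let R' : polySpace N k := ⟨R, hR⟩
  have hcoord : ∀ i, ‖b.coord i R'‖ₑ ≤ c i * ∫⁻ x in T, ‖w x‖ₑ := by
    intro i
    have h1 : b.coord i R' = ∫ x in T, w x * (r i).1 x := by
      rw [← hr i, ← hproj _ (r i).2]
      change ∫ x in T, (r i).1 x * R x = _
      congr 1; ext x; ring
    rw [h1, ← lintegral_const_mul _ hw.enorm.measurable]
    refine (enorm_integral_le_lintegral_enorm _).trans ?_
    refine setLIntegral_mono' hTo.measurableSet fun x hx => ?_
    rw [enorm_mul, mul_comm]
    gcongr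
    exact hc i x (subset_closure hx)
  have hRsum : R = fun x => ∑ i, b.coord i R' • (b i).1 x := by
    have h1 := b.sum_repr R'
    have h2 := congrArg Subtype.val h1
    ext x
    have h3 := congrFun h2 x
    simp only [Submodule.coe_sum, Finset.sum_apply] at h3
    exact h3.symm
  have hsm : ∀ i, ContDiffAt ℝ m (b i).1 x := fun i =>
    ((b i).2.contDiff.of_le (by norm_cast; exact le_top)).contDiffAt
  have hD : iteratedFDeriv ℝ m R x = ∑ i, b.coord i R' • iteratedFDeriv ℝ m (b i).1 x := by
    conv_lhs => rw [hRsum]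
    rw [iteratedFDeriv_fun_sum_apply (fun i _ => (hsm i).const_smul (b.coord i R'))]
    refine Finset.sum_congr rfl fun i _ => ?_
    exact iteratedFDeriv_const_smul_apply' (hsm i)
  rw [hD, Finset.sum_mul]
  refine (enorm_sum_le _ _).trans (Finset.sum_le_sum fun i _ => ?_)
  rw [enorm_smul]
  calc _ ≤ (c i * ∫⁻ x in T, ‖w x‖ₑ) * d i := by
        gcongr
        · exact hcoord i
        · exact hd i x hx
    _ = _ := by ring

section
variable {n : ℕ} (b : AffineBasis (Fin (n + 2)) ℝ (EN (n + 1))) (i : Fin (n + 2))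

/-- Linear part of the parametrisation of the `i`-th face. -/
def faceM : (Fin n → ℝ) →L[ℝ] EN (n + 1) :=
  ∑ l : Fin n, (ContinuousLinearMap.proj (R := ℝ) (φ := fun _ : Fin n => ℝ) l).smulRight
    (b (i.succAbove l.succ) - b (i.succAbove 0))

lemma faceM_apply (β : Fin n → ℝ) :
    faceM b i β = ∑ l : Fin n, β l • (b (i.succAbove l.succ) - b (i.succAbove 0)) := by
  simp [faceM]

def faceΘ : (ℝ × (Fin n → ℝ)) →L[ℝ] EN (n + 1) :=
  (ContinuousLinearMap.fst ℝ ℝ (Fin n → ℝ)).smulRight (b i - b (i.succAbove 0)) +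
    (faceM b i).comp (ContinuousLinearMap.snd ℝ ℝ (Fin n → ℝ))

lemma faceΘ_apply (t : ℝ) (β : Fin n → ℝ) :
    faceΘ b i (t, β) = t • (b i - b (i.succAbove 0)) + faceM b i β := by
  simp [faceΘ]

lemma coord_linear_sub (j x y : Fin (n + 2)) :
    (b.coord j).linear (b x - b y) = b.coord j (b x) - b.coord j (b y) := by
  have := (b.coord j).linearMap_vsub (b x) (b y)
  simpa using this

lemma coord_i_faceΘ (t : ℝ) (β : Fin n → ℝ) :
    b.coord i (b (i.succAbove 0) + faceΘ b i (t, β)) = t := by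
  have h := (b.coord i).map_vadd (b (i.succAbove 0)) (faceΘ b i (t, β))
  rw [vadd_eq_add, add_comm (faceΘ b i (t, β)) (b (i.succAbove 0))] at h
  rw [h, faceΘ_apply, faceM_apply]
  simp only [map_add, map_smul, map_sum, coord_linear_sub]
  have h0 : ∀ l, b.coord i (b (i.succAbove l)) = 0 := fun l =>
    b.coord_apply_ne (Fin.succAbove_ne i l).symm
  simp [h0]

lemma coord_l_faceΘ (t : ℝ) (β : Fin n → ℝ) (l : Fin n) :
    b.coord (i.succAbove l.succ) (b (i.succAbove 0) + faceΘ b i (t, β)) = β l := by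
  have h := (b.coord (i.succAbove l.succ)).map_vadd (b (i.succAbove 0)) (faceΘ b i (t, β))
  rw [vadd_eq_add, add_comm (faceΘ b i (t, β)) (b (i.succAbove 0))] at h
  rw [h, faceΘ_apply, faceM_apply]
  simp only [map_add, map_smul, map_sum, coord_linear_sub]
  have h0 : b.coord (i.succAbove l.succ) (b (i.succAbove 0)) = 0 :=
    b.coord_apply_ne (by simp)
  have h1 : b.coord (i.succAbove l.succ) (b i) = 0 :=
    b.coord_apply_ne (Fin.succAbove_ne i _)
  have h2 : ∀ l' : Fin n, b.coord (i.succAbove l.succ) (b (i.succAbove l'.succ)) =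
      if l = l' then 1 else 0 := by
    intro l'
    rw [b.coord_apply]
    simp
  simp [h0, h1, h2]

lemma faceΘ_injective : Function.Injective (faceΘ b i) := by
  rintro ⟨t, β⟩ ⟨t', β'⟩ h
  have h1 := coord_i_faceΘ b i t β
  rw [h, coord_i_faceΘ] at h1
  have h2 : β = β' := by
    ext l
    have h2 := coord_l_faceΘ b i t β l
    rw [h, coord_l_faceΘ] at h2
    exact h2.symm
  rw [h1, h2]

def faceEquiv : (ℝ × (Fin n → ℝ)) ≃L[ℝ] EN (n + 1) :=
  (LinearEquiv.ofInjectiveOfFinrankEq (faceΘ b i).toLinearMap (faceΘ_injective b i)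
    (by simp [add_comm])).toContinuousLinearEquiv

lemma faceEquiv_apply (z : ℝ × (Fin n → ℝ)) : faceEquiv b i z = faceΘ b i z := rfl

lemma lintegral_faceΘ : ∃ κ : ℝ≥0, ∀ H : EN (n + 1) → ℝ≥0∞, Measurable H →
    ∫⁻ t, ∫⁻ β, H (b (i.succAbove 0) + faceΘ b i (t, β)) = κ * ∫⁻ x, H x := by
  have h0 : (volume : Measure (ℝ × (Fin n → ℝ))).IsAddHaarMeasure :=
    inferInstanceAs (((volume : Measure ℝ).prod (volume : Measure (Fin n → ℝ))).IsAddHaarMeasure)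
  have : ((volume : Measure (ℝ × (Fin n → ℝ))).map (faceEquiv b i)).IsAddHaarMeasure :=
    (faceEquiv b i).isAddHaarMeasure_map _
  obtain ⟨κ, hκ⟩ : ∃ κ : ℝ≥0, (volume : Measure (ℝ × (Fin n → ℝ))).map (faceEquiv b i) =
      κ • (volume : Measure (EN (n + 1))) := ⟨_, Measure.isAddLeftInvariant_eq_smul _ _⟩
  refine ⟨κ, fun H hH => ?_⟩
  have hm : Measurable (fun x => H (b (i.succAbove 0) + x)) := by fun_prop
  have hmm : Measurable (fun z => H (b (i.succAbove 0) + faceΘ b i z)) := by fun_prop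
  have h1 := lintegral_prod (μ := (volume : Measure ℝ)) (ν := (volume : Measure (Fin n → ℝ))) _
    hmm.aemeasurable
  rw [← h1, ← Measure.volume_eq_prod]
  have h2 := lintegral_map (μ := (volume : Measure (ℝ × (Fin n → ℝ)))) hm
    (faceEquiv b i).continuous.measurable
  simp only [faceEquiv_apply] at h2
  rw [← h2, hκ, lintegral_smul_measure, lintegral_add_left_eq_self]
  simp [ENNReal.smul_def]

lemma face_param {y : EN (n + 1)} (hy : b.coord i y = 0) :
    ∃ β, y = b (i.succAbove 0) + faceM b i β := by
  obtain ⟨⟨t, β⟩, h⟩ := (faceEquiv b i).surjective (y - b (i.succAbove 0))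
  rw [faceEquiv_apply] at h
  have hy2 : y = b (i.succAbove 0) + faceΘ b i (t, β) := by rw [h]; abel
  have ht : t = 0 := by rw [← hy, hy2, coord_i_faceΘ]
  exact ⟨β, by rw [hy2, faceΘ_apply, ht]; simp⟩

lemma trace_face {F : Type*} [NormedAddCommGroup F] [NormedSpace ℝ F] [CompleteSpace F]
    {q : ℝ} (hq : 1 ≤ q) :
    ∃ C : ℝ≥0∞, C ≠ ⊤ ∧ ∀ g : EN (n + 1) → F, ContDiff ℝ 1 g →
      ∫⁻ x in {y ∈ convexHull ℝ (Set.range b) | b.coord i y = 0}, ‖g x‖ₑ ^ q ∂μH[(n : ℝ)] ≤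
        C * ∫⁻ x in convexHull ℝ (Set.range b), (‖g x‖ₑ ^ q + ‖fderiv ℝ g x‖ₑ ^ q) := by
  have hq0 : 0 ≤ q := by linarith
  set S := convexHull ℝ (Set.range b) with hS
  have hSc : IsCompact S := (Set.finite_range b).isCompact_convexHull ℝ
  have hSm : MeasurableSet S := hSc.isClosed.measurableSet
  have hSconv : Convex ℝ S := convex_convexHull _ _
  set D := Metric.ediam S with hD
  have hDt : D ≠ ⊤ := hSc.isBounded.ediam_ne_top
  obtain ⟨κ, hκ⟩ := lintegral_faceΘ b i
  set c := b (i.succAbove 0) with hc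
  let φ : (Fin n → ℝ) → EN (n + 1) := fun β => c + faceM b i β
  have hφc : Continuous φ := by fun_prop
  have hφ : LipschitzWith ‖faceM b i‖₊ φ := by
    have := (faceM b i).lipschitz
    intro x y
    simpa [φ] using this x y
  have hsub : {y ∈ S | b.coord i y = 0} ⊆ φ '' (φ ⁻¹' S) := by
    rintro y ⟨hyS, hy⟩
    obtain ⟨β, rfl⟩ := face_param b i hy
    exact ⟨β, hyS, rfl⟩
  have hmeas := hausdorff_restrict_image_le hφ (Nat.cast_nonneg n) (φ ⁻¹' S) _ hsub
  have hvol : (μH[(n : ℝ)] : Measure (Fin n → ℝ)) = volume := by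
    have := hausdorffMeasure_pi_real (ι := Fin n)
    simpa using this
  rw [hvol] at hmeas
  refine ⟨((‖faceM b i‖₊ : ℝ≥0∞) ^ (n : ℝ)) * (2 ^ (q + 1) * (2 ^ n * (κ * (1 + D ^ q)))), by finiteness,
    fun g hg => ?_⟩
  have hgc : Continuous g := hg.continuous
  have hgd : Continuous (fderiv ℝ g) := hg.continuous_fderiv one_ne_zero
  have hgm : Measurable (fun x => ‖g x‖ₑ ^ q) := hgc.enorm.measurable.pow_const q
  have hgdm : Measurable (fun x => ‖fderiv ℝ g x‖ₑ ^ q) := hgd.enorm.measurable.pow_const q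
  set H : EN (n + 1) → ℝ≥0∞ :=
    S.indicator (fun x => ‖g x‖ₑ ^ q + D ^ q * ‖fderiv ℝ g x‖ₑ ^ q) with hH
  have hHm : Measurable H := (hgm.add (hgdm.const_mul _)).indicator hSm
  have hbS : b i ∈ S := subset_convexHull _ _ ⟨i, rfl⟩
  -- pointwise estimate
  have hpt : ∀ y ∈ S, ‖g y‖ₑ ^ q ≤
      2 ^ (q + 1) * ∫⁻ t in Set.Icc (0 : ℝ) (1 / 2), H (y + t • (b i - y)) := by
    intro y hy
    set I := ∫⁻ t in Set.Icc (0 : ℝ) (1 / 2), H (y + t • (b i - y)) with hI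
    have h1 : ∀ t : ℝ, HasDerivAt (fun t : ℝ => g (y + t • (b i - y)))
        (fderiv ℝ g (y + t • (b i - y)) (b i - y)) t := by
      intro t
      have ha : HasDerivAt (fun t : ℝ => y + t • (b i - y)) (b i - y) t := by
        simpa using ((hasDerivAt_id t).smul_const (b i - y)).const_add y
      exact ((hg.differentiable one_ne_zero) _).hasFDerivAt.comp_hasDerivAt t ha
    have hmem : ∀ t ∈ Set.Icc (0 : ℝ) (1 / 2), y + t • (b i - y) ∈ S := fun t ht =>
      hSconv.add_smul_sub_mem hy hbS ⟨ht.1, by linarith [ht.2]⟩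
    have h2 : ∀ t ∈ Set.Icc (0 : ℝ) (1 / 2), ‖g y - g (y + t • (b i - y))‖ₑ ^ q ≤
        ∫⁻ t in Set.Icc (0 : ℝ) (1 / 2), D ^ q * ‖fderiv ℝ g (y + t • (b i - y))‖ₑ ^ q := by
      intro t ht
      have h2 := oneD_bound h1 (by fun_prop) hq (a := 0) (b := 1 / 2) (by norm_num) (s := 0) (t := t)
        (by simp) ht
      simp only [zero_smul, add_zero] at h2
      refine h2.trans (lintegral_mono fun t => ?_)
      rw [← ENNReal.mul_rpow_of_nonneg _ _ hq0, mul_comm D]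
      gcongr
      refine (ContinuousLinearMap.le_opENorm _ _).trans ?_
      gcongr
      rw [← edist_eq_enorm_sub]
      exact Metric.edist_le_ediam_of_mem hbS hy
    set J := ∫⁻ t in Set.Icc (0 : ℝ) (1 / 2), D ^ q * ‖fderiv ℝ g (y + t • (b i - y))‖ₑ ^ q with hJ
    have h3 : ∀ t ∈ Set.Icc (0 : ℝ) (1 / 2), ‖g y‖ₑ ^ q ≤
        2 ^ (q - 1) * (‖g (y + t • (b i - y))‖ₑ ^ q + J) := by
      intro t ht
      calc ‖g y‖ₑ ^ q ≤ (‖g (y + t • (b i - y))‖ₑ + ‖g y - g (y + t • (b i - y))‖ₑ) ^ q := by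
            gcongr
            refine le_trans (le_of_eq ?_) (enorm_add_le _ _)
            congr 1; abel
        _ ≤ 2 ^ (q - 1) * (‖g (y + t • (b i - y))‖ₑ ^ q + ‖g y - g (y + t • (b i - y))‖ₑ ^ q) :=
            ENNReal.rpow_add_le_mul_rpow_add_rpow _ _ hq
        _ ≤ _ := by gcongr; exact h2 t ht
    have hvolI : volume (Set.Icc (0 : ℝ) (1 / 2)) = 2⁻¹ := by
      rw [Real.volume_Icc, sub_zero, one_div, ENNReal.ofReal_inv_of_pos (by norm_num)]; simp
    have hpath : Measurable (fun t : ℝ => y + t • (b i - y)) := by fun_prop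
    have h4 : ‖g y‖ₑ ^ q * 2⁻¹ ≤ 2 ^ (q - 1) * I := by
      calc ‖g y‖ₑ ^ q * 2⁻¹ = ∫⁻ t in Set.Icc (0 : ℝ) (1 / 2), ‖g y‖ₑ ^ q := by
            rw [setLIntegral_const, hvolI]
        _ ≤ ∫⁻ t in Set.Icc (0 : ℝ) (1 / 2), 2 ^ (q - 1) * (‖g (y + t • (b i - y))‖ₑ ^ q + J) :=
            setLIntegral_mono' measurableSet_Icc h3
        _ = 2 ^ (q - 1) * ((∫⁻ t in Set.Icc (0 : ℝ) (1 / 2), ‖g (y + t • (b i - y))‖ₑ ^ q) + J * 2⁻¹) := by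
            rw [lintegral_const_mul' _ _ (by finiteness), lintegral_add_right _ measurable_const,
              setLIntegral_const, hvolI]
        _ ≤ 2 ^ (q - 1) * ((∫⁻ t in Set.Icc (0 : ℝ) (1 / 2), ‖g (y + t • (b i - y))‖ₑ ^ q) + J) := by
            gcongr
            calc J * 2⁻¹ ≤ J * 1 := by gcongr; simp
              _ = J := mul_one _
        _ = 2 ^ (q - 1) * I := by
            congr 1
            rw [hJ, hI]
            refine (lintegral_add_left (hgm.comp hpath) _).symm.trans ?_
            refine setLIntegral_congr_fun measurableSet_Icc fun t ht => ?_
            simp only [hH]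
            rw [Set.indicator_of_mem (hmem t ht)]
            rfl
    calc ‖g y‖ₑ ^ q = 2 * (‖g y‖ₑ ^ q * 2⁻¹) := by
          rw [mul_left_comm, ENNReal.mul_inv_cancel (by simp) (by simp), mul_one]
      _ ≤ 2 * (2 ^ (q - 1) * I) := by gcongr
      _ = 2 ^ q * I := by
          rw [← mul_assoc]
          congr 1
          conv_lhs => rw [← ENNReal.rpow_one 2]
          rw [← ENNReal.rpow_mul, ← ENNReal.rpow_add _ _ (by simp) (by simp)]
          congr 1; ring
      _ ≤ _ := by
          gcongr
          · norm_num
          · linarith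
  have hslice : ∀ t ∈ Set.Icc (0 : ℝ) (1 / 2), ∫⁻ β in φ ⁻¹' S, H (φ β + t • (b i - φ β)) ≤
      2 ^ n * ∫⁻ β, H (c + faceΘ b i (t, β)) := by
    intro t ht
    refine (setLIntegral_le_lintegral _ _).trans ?_
    have := lintegral_affine_le (volume : Measure (Fin n → ℝ))
      (G := fun β => H (c + faceΘ b i (t, β))) (by fun_prop) 0 (r := 1 - t) (by linarith [ht.2])
    rw [Module.finrank_fin_fun] at this
    refine le_trans (le_of_eq ?_) this
    congr 1; ext β; congr 1
    simp only [φ, faceΘ_apply, zero_add, map_smul]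
    rw [← hc]
    module
  calc ∫⁻ x in {y ∈ S | b.coord i y = 0}, ‖g x‖ₑ ^ q ∂μH[(n : ℝ)]
      ≤ ∫⁻ x, ‖g x‖ₑ ^ q ∂(((‖faceM b i‖₊ : ℝ≥0∞) ^ (n : ℝ)) • (volume.restrict (φ ⁻¹' S)).map φ) :=
        lintegral_mono' hmeas le_rfl
    _ = ((‖faceM b i‖₊ : ℝ≥0∞) ^ (n : ℝ)) * ∫⁻ β in φ ⁻¹' S, ‖g (φ β)‖ₑ ^ q := by
        rw [lintegral_smul_measure, lintegral_map hgm hφc.measurable, smul_eq_mul]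
    _ ≤ ((‖faceM b i‖₊ : ℝ≥0∞) ^ (n : ℝ)) * ∫⁻ β in φ ⁻¹' S,
          2 ^ (q + 1) * ∫⁻ t in Set.Icc (0 : ℝ) (1 / 2), H (φ β + t • (b i - φ β)) := by
        refine mul_le_mul_right ?_ _
        exact setLIntegral_mono' (hφc.measurable hSm) fun β hβ => hpt _ hβ
    _ = ((‖faceM b i‖₊ : ℝ≥0∞) ^ (n : ℝ)) * (2 ^ (q + 1) *
          ∫⁻ t in Set.Icc (0 : ℝ) (1 / 2), ∫⁻ β in φ ⁻¹' S, H (φ β + t • (b i - φ β))) := by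
        rw [lintegral_const_mul' _ _ (by finiteness), lintegral_lintegral_swap]
        refine Measurable.aemeasurable ?_
        fun_prop
    _ ≤ ((‖faceM b i‖₊ : ℝ≥0∞) ^ (n : ℝ)) * (2 ^ (q + 1) *
          (2 ^ n * ∫⁻ t, ∫⁻ β, H (c + faceΘ b i (t, β)))) := by
        refine mul_le_mul_right (mul_le_mul_right ?_ _) _
        rw [← lintegral_const_mul' _ _ (by finiteness)]
        exact (setLIntegral_mono' measurableSet_Icc hslice).trans (setLIntegral_le_lintegral _ _)
    _ = ((‖faceM b i‖₊ : ℝ≥0∞) ^ (n : ℝ)) * (2 ^ (q + 1) * (2 ^ n * (κ * ∫⁻ x, H x))) := by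
        rw [hκ H hHm]
    _ ≤ ((‖faceM b i‖₊ : ℝ≥0∞) ^ (n : ℝ)) * (2 ^ (q + 1) * (2 ^ n * (κ * ((1 + D ^ q) *
          ∫⁻ x in S, (‖g x‖ₑ ^ q + ‖fderiv ℝ g x‖ₑ ^ q))))) := by
        refine mul_le_mul_right (mul_le_mul_right (mul_le_mul_right (mul_le_mul_right ?_ _) _) _) _
        rw [hH, lintegral_indicator hSm, ← lintegral_const_mul' _ _ (by finiteness)]
        refine lintegral_mono fun x => ?_
        rw [mul_add, add_mul 1, add_mul 1, one_mul, one_mul]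
        exact add_le_add le_self_add le_add_self
    _ = _ := by ring

end

lemma trace_simplex {n : ℕ} (b : AffineBasis (Fin (n + 2)) ℝ (EN (n + 1)))
    (F : Type*) [NormedAddCommGroup F] [NormedSpace ℝ F] [CompleteSpace F]
    {q : ℝ} (hq : 1 ≤ q) :
    ∃ C : ℝ≥0∞, C ≠ ⊤ ∧ ∀ g : EN (n + 1) → F, ContDiff ℝ 1 g →
      ∫⁻ x in frontier (interior (convexHull ℝ (Set.range b))), ‖g x‖ₑ ^ q ∂μH[(n : ℝ)] ≤
        C * ∫⁻ x in interior (convexHull ℝ (Set.range b)),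
          (‖g x‖ₑ ^ q + ‖fderiv ℝ g x‖ₑ ^ q) := by
  have h := fun i => trace_face (F := F) b i hq
  choose C hC hCb using h
  refine ⟨∑ i, C i, by simpa using hC, fun g hg => ?_⟩
  set S := convexHull ℝ (Set.range b) with hS
  have hSc : IsCompact S := (Set.finite_range b).isCompact_convexHull ℝ
  have hSconv : Convex ℝ S := convex_convexHull _ _
  have hae : interior S =ᵐ[volume] S :=
    interior_ae_eq_of_null_frontier (hSconv.addHaar_frontier _)
  have hsub : frontier (interior S) ⊆ ⋃ i, {y ∈ S | b.coord i y = 0} := by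
    intro y hy
    rw [frontier, interior_interior] at hy
    have hyS : y ∈ S := closure_minimal interior_subset hSc.isClosed hy.1
    have h2 := hy.2
    rw [hS, b.interior_convexHull] at h2
    have h1 := hyS
    rw [hS, b.convexHull_eq_nonneg_coord] at h1
    simp only [Set.mem_ofPred_eq, not_forall, not_lt] at h1 h2
    obtain ⟨i, hi⟩ := h2
    exact Set.mem_iUnion.2 ⟨i, hyS, le_antisymm hi (h1 i)⟩
  rw [Measure.restrict_congr_set hae]
  refine (lintegral_mono_set hsub).trans ?_
  refine (lintegral_iUnion_le _ _).trans ?_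
  rw [tsum_fintype, Finset.sum_mul]
  exact Finset.sum_le_sum fun i _ => hCb i g hg

lemma hausdorff_frontier_lt_top {n : ℕ} (b : AffineBasis (Fin (n + 2)) ℝ (EN (n + 1))) :
    μH[(n : ℝ)] (frontier (interior (convexHull ℝ (Set.range b)))) ≠ ⊤ := by
  obtain ⟨C, hC, h⟩ := trace_simplex b ℝ (q := 1) le_rfl
  have hSc : IsCompact (convexHull ℝ (Set.range b)) := (Set.finite_range b).isCompact_convexHull ℝ
  have := h (fun _ => 1) contDiff_const
  simp at this
  refine ne_top_of_le_ne_top ?_ this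
  refine ENNReal.mul_ne_top hC ?_
  refine ENNReal.mul_ne_top (by simp) ?_
  exact ((measure_mono interior_subset).trans_lt (hSc.measure_lt_top (μ := volume))).ne

lemma reference_estimate {n : ℕ} (b : AffineBasis (Fin (n + 2)) ℝ (EN (n + 1)))
    {q : ℝ} (hq : 1 ≤ q) (k s m : ℕ) (hsk : s ≤ k + 1) (hm : m + 1 ≤ s) :
    ∃ C : ℝ≥0∞, C ≠ ⊤ ∧ ∀ u : EN (n + 1) → ℝ, ContDiff ℝ (⊤ : ℕ∞) u →
      ∀ P : EN (n + 1) → ℝ, IsPolyDegLE (n + 1) k P →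
      (∀ r, IsPolyDegLE (n + 1) k r →
        ∫ x in interior (convexHull ℝ (Set.range b)), P x * r x =
          ∫ x in interior (convexHull ℝ (Set.range b)), u x * r x) →
      ∫⁻ x in frontier (interior (convexHull ℝ (Set.range b))),
          ‖iteratedFDeriv ℝ m (fun y => u y - P y) x‖ₑ ^ q ∂μH[(n : ℝ)] ≤
        C * ∫⁻ x in interior (convexHull ℝ (Set.range b)), ‖iteratedFDeriv ℝ s u x‖ₑ ^ q := by
  have hq0 : 0 ≤ q := by linarith
  set S := convexHull ℝ (Set.range b) with hS
  have hfr := hausdorff_frontier_lt_top b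
  have hcs : CompleteSpace (EN (n + 1) [×m]→L[ℝ] ℝ) :=
    ContinuousMultilinearMap.instCompleteSpace
  obtain ⟨C1, hC1, htr⟩ := trace_simplex b (EN (n + 1) [×m]→L[ℝ] ℝ) hq
  rw [← hS] at hfr htr
  set T := interior S with hT
  have hSc : IsCompact S := (Set.finite_range b).isCompact_convexHull ℝ
  have hSconv : Convex ℝ S := convex_convexHull _ _
  have hTo : IsOpen T := isOpen_interior
  have hTc : Convex ℝ T := hSconv.interior
  have hTb : Bornology.IsBounded T := hSc.isBounded.subset interior_subset
  have hTn : T.Nonempty := by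
    rw [hT, hS]
    exact interior_convexHull_nonempty_iff_affineSpan_eq_top.2 b.tot
  have hvol : volume T ≠ ⊤ := hTb.measure_lt_top.ne
  obtain ⟨C2, hC2, hbh⟩ := bramble_hilbert hTo hTc hTb hTn hq s
  obtain ⟨C3, hC3, hst⟩ := projection_stability k m hTo hTb hTn
  set M := μH[(n : ℝ)] (frontier T) with hM
  refine ⟨2 ^ (q - 1) * (C1 * (C2 + C2) + C3 ^ q * (volume T ^ (q - 1) * C2) * M), by
    have : 0 ≤ q - 1 := by linarith
    finiteness, fun u hu P hP hPu => ?_⟩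
  obtain ⟨Q, hQ, -, hQb⟩ := hbh u hu
  have hQk : IsPolyDegLE (n + 1) k Q := hQ.mono (by omega)
  have hQs : ContDiff ℝ (⊤ : ℕ∞) Q := hQ.contDiff.of_le (by norm_cast)
  have hPs : ContDiff ℝ (⊤ : ℕ∞) P := hP.contDiff.of_le (by norm_cast)
  set w : EN (n + 1) → ℝ := fun x => u x - Q x with hw
  have hws : ContDiff ℝ (⊤ : ℕ∞) w := hu.sub hQs
  set R : EN (n + 1) → ℝ := fun x => P x - Q x with hR
  have hRp : IsPolyDegLE (n + 1) k R := hP.sub hQk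
  have hRs : ContDiff ℝ (⊤ : ℕ∞) R := hPs.sub hQs
  have hproj : ∀ r, IsPolyDegLE (n + 1) k r → ∫ x in T, R x * r x = ∫ x in T, w x * r x := by
    intro r hr
    have hrc := hr.contDiff.continuous
    have i1 : IntegrableOn (fun x => P x * r x) T :=
      integrableOn_of_bounded hTb (hPs.continuous.mul hrc)
    have i2 : IntegrableOn (fun x => Q x * r x) T :=
      integrableOn_of_bounded hTb (hQs.continuous.mul hrc)
    have i3 : IntegrableOn (fun x => u x * r x) T :=
      integrableOn_of_bounded hTb (hu.continuous.mul hrc)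
    simp only [hR, hw, sub_mul]
    rw [integral_sub i1 i2, integral_sub i3 i2, hPu r hr]
  have hstab := hst w hws.continuous R hRp hproj
  set E := ∫⁻ x in T, ‖iteratedFDeriv ℝ s u x‖ₑ ^ q with hE
  have hw0 : ∫⁻ x in T, ‖w x‖ₑ ^ q ≤ C2 * E := by
    refine le_trans (le_of_eq ?_) (hQb 0 (Nat.zero_le _))
    congr 1; ext x; congr 1
    rw [← ofReal_norm, ← ofReal_norm, norm_iteratedFDeriv_zero]
  have hL1 : (∫⁻ x in T, ‖w x‖ₑ) ^ q ≤ volume T ^ (q - 1) * (C2 * E) := by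
    refine le_trans ?_ (mul_le_mul_right hw0 _)
    rcases hq.eq_or_lt with h1 | h1
    · subst h1; simp
    have hh := ENNReal.lintegral_mul_le_Lp_mul_Lq (volume.restrict T)
      (Real.HolderConjugate.conjExponent h1) (f := fun x => ‖w x‖ₑ) (g := fun _ => 1)
      hws.continuous.enorm.aemeasurable aemeasurable_const
    simp only [Pi.mul_apply, mul_one, ENNReal.one_rpow, lintegral_const, one_mul,
      Measure.restrict_apply MeasurableSet.univ, Set.univ_inter] at hh
    refine (ENNReal.rpow_le_rpow hh hq0).trans (le_of_eq ?_)
    rw [ENNReal.mul_rpow_of_nonneg _ _ hq0, ← ENNReal.rpow_mul, ← ENNReal.rpow_mul, mul_comm]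
    have : q - 1 ≠ 0 := by linarith
    have : q ≠ 0 := by linarith
    congr 2
    · rw [Real.conjExponent]; field_simp
    · rw [one_div_mul_cancel this, ENNReal.rpow_one]
  have hpt : ∀ x ∈ frontier T, ‖iteratedFDeriv ℝ m (fun y => u y - P y) x‖ₑ ^ q ≤
      2 ^ (q - 1) * (‖iteratedFDeriv ℝ m w x‖ₑ ^ q + C3 ^ q * (volume T ^ (q - 1) * (C2 * E))) := by
    intro x hx
    have e1 : (fun y => u y - P y) = fun y => w y - R y := by ext y; simp [hw, hR]
    rw [e1, fun_iteratedFDeriv_sub_apply (hws.of_le (by norm_cast; exact le_top)).contDiffAt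
      (hRs.of_le (by norm_cast; exact le_top)).contDiffAt]
    refine (ENNReal.rpow_le_rpow (enorm_sub_le) hq0).trans ?_
    refine (ENNReal.rpow_add_le_mul_rpow_add_rpow _ _ hq).trans ?_
    gcongr
    refine (ENNReal.rpow_le_rpow (hstab x (frontier_subset_closure hx)) hq0).trans ?_
    rw [ENNReal.mul_rpow_of_nonneg _ _ hq0]
    gcongr
  have htrw : ∫⁻ x in frontier T, ‖iteratedFDeriv ℝ m w x‖ₑ ^ q ∂μH[(n : ℝ)] ≤
      C1 * (C2 * E + C2 * E) := by
    refine (htr (iteratedFDeriv ℝ m w) (hws.iteratedFDeriv_right (by norm_cast; exact le_top))).trans ?_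
    refine mul_le_mul_right ?_ _
    have hc : Continuous (iteratedFDeriv ℝ m w) := hws.continuous_iteratedFDeriv (by norm_cast; exact le_top)
    rw [lintegral_add_left (hc.enorm.measurable.pow_const q)]
    refine add_le_add (hQb m (by omega)) (le_trans (le_of_eq ?_) (hQb (m + 1) hm))
    congr 1; ext x; congr 1
    rw [← ofReal_norm, ← ofReal_norm, norm_fderiv_iteratedFDeriv]
  calc ∫⁻ x in frontier T, ‖iteratedFDeriv ℝ m (fun y => u y - P y) x‖ₑ ^ q ∂μH[(n : ℝ)]
      ≤ ∫⁻ x in frontier T, 2 ^ (q - 1) * (‖iteratedFDeriv ℝ m w x‖ₑ ^ q +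
          C3 ^ q * (volume T ^ (q - 1) * (C2 * E))) ∂μH[(n : ℝ)] :=
        setLIntegral_mono' isClosed_frontier.measurableSet hpt
    _ = 2 ^ (q - 1) * ((∫⁻ x in frontier T, ‖iteratedFDeriv ℝ m w x‖ₑ ^ q ∂μH[(n : ℝ)]) +
          C3 ^ q * (volume T ^ (q - 1) * (C2 * E)) * M) := by
        have : 0 ≤ q - 1 := by linarith
        rw [lintegral_const_mul' _ _ (by finiteness), lintegral_add_right _ measurable_const,
          setLIntegral_const]
    _ ≤ 2 ^ (q - 1) * (C1 * (C2 * E + C2 * E) +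
          C3 ^ q * (volume T ^ (q - 1) * (C2 * E)) * M) := by gcongr
    _ = _ := by ring

lemma enorm_iteratedFDeriv_comp_affine {N : ℕ} {w : EN N → ℝ} (hw : ContDiff ℝ (⊤ : ℕ∞) w)
    (c : EN N) (L : EN N →L[ℝ] EN N) (m : ℕ) (x : EN N) :
    ‖iteratedFDeriv ℝ m (fun y => w (c + L y)) x‖ₑ ≤
      ‖iteratedFDeriv ℝ m w (c + L x)‖ₑ * ‖L‖ₑ ^ m := by
  have hs : ContDiff ℝ (⊤ : ℕ∞) (fun z => w (c + z)) := hw.comp (contDiff_const.add contDiff_id)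
  have h1 := L.iteratedFDeriv_comp_right hs x (i := m) (by norm_cast; exact le_top)
  have h2 : (fun y => w (c + L y)) = (fun z => w (c + z)) ∘ L := rfl
  rw [h2, h1, iteratedFDeriv_comp_add_left]
  have h3 := (iteratedFDeriv ℝ m w (c + L x)).norm_compContinuousLinearMap_le (fun _ => L)
  rw [Finset.prod_const, Finset.card_univ, Fintype.card_fin] at h3
  rw [← ofReal_norm, ← ofReal_norm, ← ofReal_norm, ← ENNReal.ofReal_pow (norm_nonneg _),
    ← ENNReal.ofReal_mul (norm_nonneg _)]
  exact ENNReal.ofReal_le_ofReal h3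

lemma lipschitz_affine {N : ℕ} (c : EN N) (L : EN N →L[ℝ] EN N) :
    LipschitzWith ‖L‖₊ (fun x => c + L x) := by
  have := L.lipschitz
  intro x y
  simpa using this x y

lemma lintegral_frontier_affine_le {n : ℕ} (c : EN (n + 1)) (L : EN (n + 1) →L[ℝ] EN (n + 1))
    {R S : Set (EN (n + 1))} (hR : R ⊆ (fun x => c + L x) '' S) {G : EN (n + 1) → ℝ≥0∞}
    (hG : Measurable G) {d : ℝ} (hd : 0 ≤ d) :
    ∫⁻ x in R, G x ∂μH[d] ≤ ‖L‖ₑ ^ d * ∫⁻ x in S, G (c + L x) ∂μH[d] := by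
  have h := hausdorff_restrict_image_le (lipschitz_affine c L) hd S R hR
  refine (lintegral_mono' h le_rfl).trans (le_of_eq ?_)
  rw [lintegral_smul_measure, lintegral_map hG (by fun_prop), smul_eq_mul]
  rfl

lemma setLIntegral_affine_le {n : ℕ} (c : EN (n + 1)) (L : EN (n + 1) →L[ℝ] EN (n + 1))
    {R S : Set (EN (n + 1))} (hR : R ⊆ (fun x => c + L x) '' S) {G : EN (n + 1) → ℝ≥0∞}
    (hG : Measurable G) :
    ∫⁻ x in R, G x ≤ ‖L‖ₑ ^ (n + 1) * ∫⁻ x in S, G (c + L x) := by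
  have hH : (μH[((n + 1 : ℕ) : ℝ)] : Measure (EN (n + 1))).IsAddHaarMeasure := by
    have := isAddHaarMeasure_hausdorffMeasure (E := EN (n + 1))
    simpa using this
  obtain ⟨κ, hκ⟩ : ∃ κ : ℝ≥0, (volume : Measure (EN (n + 1))) =
      κ • (μH[((n + 1 : ℕ) : ℝ)] : Measure (EN (n + 1))) :=
    ⟨_, Measure.isAddLeftInvariant_eq_smul _ _⟩
  have h := lintegral_frontier_affine_le c L hR hG (d := ((n + 1 : ℕ) : ℝ)) (Nat.cast_nonneg _)
  rw [ENNReal.rpow_natCast] at h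
  rw [hκ, Measure.restrict_smul, Measure.restrict_smul, lintegral_smul_measure,
    lintegral_smul_measure, ENNReal.smul_def, ENNReal.smul_def, smul_eq_mul, smul_eq_mul,
    mul_left_comm]
  exact mul_le_mul_right h _

lemma transport_estimate {n : ℕ} (b : AffineBasis (Fin (n + 2)) ℝ (EN (n + 1)))
    {q : ℝ} (hq : 1 ≤ q) (k s m : ℕ) (hsk : s ≤ k + 1) (hm : m + 1 ≤ s) :
    ∃ C : ℝ≥0∞, C ≠ ⊤ ∧ ∀ (L : EN (n + 1) ≃L[ℝ] EN (n + 1)) (c : EN (n + 1)) (T : Set (EN (n + 1))),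
      T = (fun x => c + L x) '' interior (convexHull ℝ (Set.range b)) →
      ∀ u : EN (n + 1) → ℝ, ContDiff ℝ (⊤ : ℕ∞) u →
      ∀ P : EN (n + 1) → ℝ, IsPolyDegLE (n + 1) k P →
      (∀ r, IsPolyDegLE (n + 1) k r → ∫ x in T, P x * r x = ∫ x in T, u x * r x) →
      ∫⁻ x in frontier T, ‖iteratedFDeriv ℝ m (fun y => u y - P y) x‖ₑ ^ q ∂μH[(n : ℝ)] ≤
        C * (‖(L : EN (n + 1) →L[ℝ] EN (n + 1))‖ₑ ^ n *
          (‖(L.symm : EN (n + 1) →L[ℝ] EN (n + 1))‖ₑ ^ m) ^ q *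
          (‖(L : EN (n + 1) →L[ℝ] EN (n + 1))‖ₑ ^ s) ^ q *
          ‖(L.symm : EN (n + 1) →L[ℝ] EN (n + 1))‖ₑ ^ (n + 1)) *
          ∫⁻ x in T, ‖iteratedFDeriv ℝ s u x‖ₑ ^ q := by
  have hq0 : 0 ≤ q := by linarith
  obtain ⟨C, hC, href⟩ := reference_estimate b hq k s m hsk hm
  refine ⟨C, hC, fun L c T hT u hu P hP hPu => ?_⟩
  set T' := interior (convexHull ℝ (Set.range b)) with hT'
  have hT'm : MeasurableSet T' := isOpen_interior.measurableSet
  set L1 : EN (n + 1) →L[ℝ] EN (n + 1) := (L : EN (n + 1) →L[ℝ] EN (n + 1)) with hL1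
  set L2 : EN (n + 1) →L[ℝ] EN (n + 1) := (L.symm : EN (n + 1) →L[ℝ] EN (n + 1)) with hL2
  have h12 : ∀ x, L1 (L2 x) = x := fun x => L.apply_symm_apply x
  have h21 : ∀ x, L2 (L1 x) = x := fun x => L.symm_apply_apply x
  set c' : EN (n + 1) := - L2 c with hc'
  have hAB : ∀ x, c + L1 (c' + L2 x) = x := by
    intro x; rw [map_add, hc', map_neg, h12, h12]; abel
  have hBA : ∀ x, c' + L2 (c + L1 x) = x := by
    intro x; rw [map_add, hc', h21]; abel
  let A : EN (n + 1) ≃ₜ EN (n + 1) :=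
    { toFun := fun x => c + L1 x
      invFun := fun x => c' + L2 x
      left_inv := hBA
      right_inv := hAB
      continuous_toFun := by fun_prop
      continuous_invFun := by fun_prop }
  have hfr : frontier T = (fun x => c + L1 x) '' frontier T' := by
    rw [hT]; exact (A.image_frontier T').symm
  have hTT : T' = (fun x => c' + L2 x) '' T := by
    rw [hT, Set.image_image]
    have : ∀ x, c' + L2 (c + L x) = x := hBA
    simp only [this, Set.image_id']
  have hPs : ContDiff ℝ (⊤ : ℕ∞) P := hP.contDiff.of_le (by norm_cast)
  have hA : ContDiff ℝ (⊤ : ℕ∞) (fun x => c + L1 x) := contDiff_const.add L1.contDiff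
  have hdet : ∀ g : EN (n + 1) → ℝ, ∫ x in T, g x = |L1.det| * ∫ x in T', g (c + L1 x) := by
    intro g
    rw [hT, integral_image_eq_integral_abs_det_fderiv_smul (f' := fun _ => L1) volume hT'm ?_ ?_]
    · simp only [smul_eq_mul]
      rw [integral_const_mul]
      rfl
    · intro x _
      exact (L1.hasFDerivAt.const_add c).hasFDerivWithinAt
    · exact A.injective.injOn
  have hdet0 : |L1.det| ≠ 0 := by
    rw [abs_ne_zero]
    exact (LinearEquiv.isUnit_det' L.toLinearEquiv).ne_zero
  have key := href (fun x => u (c + L1 x)) (hu.comp hA) (fun x => P (c + L1 x))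
    (hP.comp_affine c L1) (by
      intro r hr
      have h := hPu _ (hr.comp_affine c' L2)
      rw [hdet, hdet] at h
      have h := mul_left_cancel₀ hdet0 h
      simpa only [hBA] using h)
  set w : EN (n + 1) → ℝ := fun y => u y - P y with hw
  have hws : ContDiff ℝ (⊤ : ℕ∞) w := hu.sub hPs
  have hwc : Continuous (iteratedFDeriv ℝ m w) :=
    hws.continuous_iteratedFDeriv (by norm_cast; exact le_top)
  have huc : Continuous (iteratedFDeriv ℝ s u) :=
    hu.continuous_iteratedFDeriv (by norm_cast; exact le_top)
  have huc' : Continuous (iteratedFDeriv ℝ s (fun x => u (c + L1 x))) :=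
    (hu.comp hA).continuous_iteratedFDeriv (by norm_cast; exact le_top)
  have hm1 : ∀ x, ‖iteratedFDeriv ℝ m w (c + L1 x)‖ₑ ^ q ≤
      (‖L2‖ₑ ^ m) ^ q * ‖iteratedFDeriv ℝ m (fun y => w (c + L1 y)) x‖ₑ ^ q := by
    intro x
    have h := enorm_iteratedFDeriv_comp_affine (hws.comp hA) c' L2 m (c + L1 x)
    simp only [Function.comp_apply, hAB, hBA] at h
    rw [← ENNReal.mul_rpow_of_nonneg _ _ hq0, mul_comm]
    exact ENNReal.rpow_le_rpow h hq0
  have hs1 : ∀ x, ‖iteratedFDeriv ℝ s (fun y => u (c + L1 y)) (c' + L2 x)‖ₑ ^ q ≤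
      (‖L1‖ₑ ^ s) ^ q * ‖iteratedFDeriv ℝ s u x‖ₑ ^ q := by
    intro x
    have h := enorm_iteratedFDeriv_comp_affine hu c L1 s (c' + L2 x)
    rw [hAB] at h
    rw [← ENNReal.mul_rpow_of_nonneg _ _ hq0, mul_comm]
    exact ENNReal.rpow_le_rpow h hq0
  have hfin1 : (‖L2‖ₑ ^ m) ^ q ≠ ⊤ := by finiteness
  have hfin2 : (‖L1‖ₑ ^ s) ^ q ≠ ⊤ := by finiteness
  calc ∫⁻ x in frontier T, ‖iteratedFDeriv ℝ m w x‖ₑ ^ q ∂μH[(n : ℝ)]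
      ≤ ‖L1‖ₑ ^ (n : ℝ) * ∫⁻ x in frontier T', ‖iteratedFDeriv ℝ m w (c + L1 x)‖ₑ ^ q ∂μH[(n : ℝ)] :=
        lintegral_frontier_affine_le c L1 hfr.le (G := fun x => ‖iteratedFDeriv ℝ m w x‖ₑ ^ q)
          (hwc.enorm.measurable.pow_const q) (Nat.cast_nonneg n)
    _ ≤ ‖L1‖ₑ ^ (n : ℝ) * ((‖L2‖ₑ ^ m) ^ q * ∫⁻ x in frontier T',
          ‖iteratedFDeriv ℝ m (fun y => w (c + L1 y)) x‖ₑ ^ q ∂μH[(n : ℝ)]) := by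
        rw [← lintegral_const_mul' _ _ hfin1]
        exact mul_le_mul_right (lintegral_mono hm1) _
    _ ≤ ‖L1‖ₑ ^ (n : ℝ) * ((‖L2‖ₑ ^ m) ^ q * (C * ∫⁻ x in T',
          ‖iteratedFDeriv ℝ s (fun x => u (c + L1 x)) x‖ₑ ^ q)) :=
        mul_le_mul_right (mul_le_mul_right key _) _
    _ ≤ ‖L1‖ₑ ^ (n : ℝ) * ((‖L2‖ₑ ^ m) ^ q * (C * (‖L2‖ₑ ^ (n + 1) * ∫⁻ x in T,
          ‖iteratedFDeriv ℝ s (fun x => u (c + L1 x)) (c' + L2 x)‖ₑ ^ q))) :=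
        mul_le_mul_right (mul_le_mul_right (mul_le_mul_right (setLIntegral_affine_le c' L2 hTT.le
          (G := fun x => ‖iteratedFDeriv ℝ s (fun x => u (c + L1 x)) x‖ₑ ^ q)
          (huc'.enorm.measurable.pow_const q)) _) _) _
    _ ≤ ‖L1‖ₑ ^ (n : ℝ) * ((‖L2‖ₑ ^ m) ^ q * (C * (‖L2‖ₑ ^ (n + 1) * ((‖L1‖ₑ ^ s) ^ q * ∫⁻ x in T,
          ‖iteratedFDeriv ℝ s u x‖ₑ ^ q)))) := by
        refine mul_le_mul_right (mul_le_mul_right (mul_le_mul_right (mul_le_mul_right ?_ _) _) _) _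
        rw [← lintegral_const_mul' _ _ hfin2]
        exact lintegral_mono hs1
    _ = _ := by rw [ENNReal.rpow_natCast]; ring

/-- A function that is smooth near a closed set agrees near it with a globally smooth one. -/
lemma exists_global_smooth {N : ℕ} {K V : Set (EN N)} (hK : IsClosed K) (hV : IsOpen V)
    (hKV : K ⊆ V) {v : EN N → ℝ} (hv : ContDiffOn ℝ (⊤ : ℕ∞) v V) :
    ∃ u : EN N → ℝ, ContDiff ℝ (⊤ : ℕ∞) u ∧ ∀ x ∈ K, u =ᶠ[nhds x] v := by
  obtain ⟨t, htc, hKt, htV⟩ : ∃ t, IsClosed t ∧ K ⊆ interior t ∧ t ⊆ V := by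
    obtain ⟨U, hU, hKU, hUV⟩ := normal_exists_closure_subset hK hV hKV
    exact ⟨closure U, isClosed_closure, hKU.trans (hU.subset_interior_iff.2 subset_closure), hUV⟩
  obtain ⟨f, hf1, hf0, -⟩ := exists_contMDiffMap_one_nhds_of_subset_interior (n := (⊤ : ℕ∞))
    (modelWithCornersSelf ℝ (EN N)) hK hKt
  have hfs : ContDiff ℝ (⊤ : ℕ∞) f := f.contMDiff.contDiff
  refine ⟨fun x => f x * v x, ?_, ?_⟩
  · rw [contDiff_iff_contDiffAt]
    intro x
    by_cases hx : x ∈ t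
    · exact hfs.contDiffAt.mul (hv.contDiffAt (hV.mem_nhds (htV hx)))
    · have : (fun x => f x * v x) =ᶠ[nhds x] fun _ => 0 := by
        filter_upwards [htc.isOpen_compl.mem_nhds hx] with y hy
        rw [hf0 y hy, zero_mul]
      exact contDiffAt_const.congr_of_eventuallyEq this
  · intro x hx
    filter_upwards [Filter.Eventually.filter_mono (nhds_le_nhdsSet hx) hf1] with y hy
    rw [hy, one_mul]

lemma opNorm_le_of_ball_image {N : ℕ} (L : EN N →L[ℝ] EN N) (c : EN N) {U W : Set (EN N)}
    {x0 : EN N} {r : ℝ} (hr : 0 < r) (hU : ball x0 r ⊆ U) (hW : Bornology.IsBounded W)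
    (hUW : ∀ x ∈ U, c + L x ∈ W) : ‖L‖ ≤ 2 * diam W / r := by
  have hd : 0 ≤ diam W := diam_nonneg
  refine L.opNorm_le_bound (by positivity) fun y => ?_
  rcases eq_or_ne y 0 with rfl | hy
  · simp
  have hy0 : 0 < ‖y‖ := norm_pos_iff.2 hy
  set t : ℝ := r / 2 / ‖y‖ with ht
  have ht0 : 0 < t := by positivity
  have h1 : x0 + t • y ∈ U := by
    apply hU
    rw [mem_ball, dist_eq_norm, add_sub_cancel_left, norm_smul, Real.norm_of_nonneg ht0.le, ht,
      div_mul_cancel₀ _ hy0.ne']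
    linarith
  have h2 : x0 ∈ U := hU (mem_ball_self hr)
  have h3 := dist_le_diam_of_mem hW (hUW _ h1) (hUW _ h2)
  rw [dist_eq_norm, map_add, map_smul] at h3
  have h4 : c + (L x0 + t • L y) - (c + L x0) = t • L y := by abel
  rw [h4, norm_smul, Real.norm_of_nonneg ht0.le] at h3
  have h5 : ‖L y‖ ≤ diam W / t := by
    rw [le_div_iff₀ ht0, mul_comm]; exact h3
  refine h5.trans (le_of_eq ?_)
  rw [ht]; field_simp

lemma exists_affine_equiv {n : ℕ} (b b' : AffineBasis (Fin (n + 2)) ℝ (EN (n + 1))) :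
    ∃ (L : EN (n + 1) ≃L[ℝ] EN (n + 1)) (c : EN (n + 1)),
      interior (convexHull ℝ (Set.range b')) =
        (fun x => c + L x) '' interior (convexHull ℝ (Set.range b)) := by
  let L0 : EN (n + 1) ≃ₗ[ℝ] EN (n + 1) := (b.basisOf 0).equiv (b'.basisOf 0) (Equiv.refl _)
  let L := L0.toContinuousLinearEquiv
  have hL : ∀ j, L (b j - b 0) = b' j - b' 0 := by
    intro j
    by_cases hj : j = 0
    · subst hj; simp
    · have := (b.basisOf 0).equiv_apply (⟨j, hj⟩ : {j : Fin (n + 2) // j ≠ 0}) (b'.basisOf 0) (Equiv.refl _)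
      have e : L (b j - b 0) = L0 (b.basisOf 0 ⟨j, hj⟩) := by rw [b.basisOf_apply]; rfl
      rw [e]
      refine this.trans ?_
      rw [Equiv.refl_apply, b'.basisOf_apply]; rfl
  refine ⟨L, b' 0 - L (b 0), ?_⟩
  set c := b' 0 - L (b 0) with hc
  have hA : ∀ j, c + L (b j) = b' j := by
    intro j
    have := hL j
    rw [map_sub] at this
    rw [hc, ← sub_add_cancel (b' j) (b' 0), ← this]; abel
  let H : EN (n + 1) ≃ₜ EN (n + 1) := L.toHomeomorph.trans (Homeomorph.addLeft c)
  have hH : ⇑H = fun x => c + L x := rfl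
  let A : EN (n + 1) →ᵃ[ℝ] EN (n + 1) :=
    AffineMap.const ℝ (EN (n + 1)) c + (L : EN (n + 1) →ₗ[ℝ] EN (n + 1)).toAffineMap
  have hAA : ⇑A = fun x => c + L x := by ext x; simp [A]
  rw [← hH, H.image_interior, hH, ← hAA, A.image_convexHull, hAA, ← Set.range_comp]
  congr 3
  ext j : 1
  exact (hA j).symm

lemma scaling_identity {H : ℝ≥0∞} (h0 : H ≠ 0) (ht : H ≠ ⊤) {q : ℝ} (hq : 1 ≤ q)
    {n m s : ℕ} (hm : m ≤ s) :
    H * (H ^ n * (H⁻¹ ^ m) ^ q * (H ^ s) ^ q * H⁻¹ ^ (n + 1)) = (H ^ (s - m)) ^ q := by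
  have hq0 : 0 ≤ q := by linarith
  have e1 : H * H ^ n * H⁻¹ ^ (n + 1) = 1 := by
    rw [← pow_succ', ← mul_pow, ENNReal.mul_inv_cancel h0 ht, one_pow]
  have e2 : H⁻¹ ^ m * H ^ s = H ^ (s - m) := by
    obtain ⟨d, rfl⟩ := Nat.exists_eq_add_of_le hm
    rw [Nat.add_sub_cancel_left, pow_add, ← mul_assoc, ← mul_pow, ENNReal.inv_mul_cancel h0 ht,
      one_pow, one_mul]
  calc _ = (H * H ^ n * H⁻¹ ^ (n + 1)) * ((H⁻¹ ^ m) ^ q * (H ^ s) ^ q) := by ring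
    _ = _ := by rw [e1, one_mul, ← ENNReal.mul_rpow_of_nonneg _ _ hq0, e2]

lemma simplex_estimate (n k s : ℕ) (hsk : s ≤ k + 1) {q : ℝ} (hq : 1 ≤ q) {ϱ : ℝ} (hϱ : 0 < ϱ)
    (m : ℕ) (hm : m + 1 ≤ s) :
    ∃ K : ℝ≥0∞, K ≠ ⊤ ∧
      ∀ f : Fin (n + 1 + 1) → EN (n + 1), AffineIndependent ℝ f →
      ∀ T : Set (EN (n + 1)), T = interior (convexHull ℝ (Set.range f)) →
        ϱ * diam T ≤ sSup {r : ℝ | ∃ x, ball x r ⊆ T} →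
      ∀ v : EN (n + 1) → ℝ,
        (∃ V, IsOpen V ∧ closure T ⊆ V ∧ ContDiffOn ℝ (⊤ : ℕ∞) v V) →
      ∀ P : EN (n + 1) → ℝ, IsPolyDegLE (n + 1) k P →
        (∀ r, IsPolyDegLE (n + 1) k r → ∫ x in T, P x * r x = ∫ x in T, v x * r x) →
        ENNReal.ofReal (diam T) *
          ∫⁻ x in frontier T, ‖iteratedFDeriv ℝ m (fun y => v y - P y) x‖ₑ ^ q ∂μH[(n : ℝ)] ≤
          K * (ENNReal.ofReal (diam T) ^ (s - m)) ^ q *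
            ∫⁻ x in T, ‖iteratedFDeriv ℝ s v x‖ₑ ^ q := by
  have hq0 : 0 ≤ q := by linarith
  obtain ⟨b⟩ : Nonempty (AffineBasis (Fin (n + 2)) ℝ (EN (n + 1))) :=
    AffineBasis.exists_affineBasis_of_finiteDimensional (by simp)
  obtain ⟨C, hC, htr⟩ := transport_estimate b hq k s m hsk hm
  set T' := interior (convexHull ℝ (Set.range b)) with hT'
  have hbdd : ∀ g : Fin (n + 2) → EN (n + 1),
      Bornology.IsBounded (interior (convexHull ℝ (Set.range g))) := fun g =>
    ((Set.finite_range g).isCompact_convexHull ℝ).isBounded.subset interior_subset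
  obtain ⟨x1, hx1⟩ : T'.Nonempty := interior_convexHull_nonempty_iff_affineSpan_eq_top.2 b.tot
  obtain ⟨r1, hr1, hball1⟩ := Metric.isOpen_iff.1 isOpen_interior x1 hx1
  set α : ℝ := 2 / r1 with hα
  set β : ℝ := 2 * diam T' / (ϱ / 2) with hβ
  have hα0 : 0 ≤ α := by positivity
  have hβ0 : 0 ≤ β := by have := diam_nonneg (s := T'); positivity
  refine ⟨C * (ENNReal.ofReal α ^ n * (ENNReal.ofReal β ^ m) ^ q * (ENNReal.ofReal α ^ s) ^ q *
    ENNReal.ofReal β ^ (n + 1)), by finiteness, ?_⟩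
  intro f hf T hT hreg v ⟨V, hV, hTV, hv⟩ P hP hPv
  let b' : AffineBasis (Fin (n + 2)) ℝ (EN (n + 1)) :=
    ⟨f, hf, (hf.affineSpan_eq_top_iff_card_eq_finrank_add_one).2 (by simp)⟩
  have hTb' : T = interior (convexHull ℝ (Set.range b')) := hT
  have hTo : IsOpen T := by rw [hT]; exact isOpen_interior
  have hTb : Bornology.IsBounded T := by rw [hT]; exact hbdd f
  have hTn : T.Nonempty := by
    rw [hTb']; exact interior_convexHull_nonempty_iff_affineSpan_eq_top.2 b'.tot
  obtain ⟨x2, hx2⟩ := hTn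
  have hpos : 0 < diam T := by
    have : (nhdsWithin x2 {x2}ᶜ).NeBot := Module.punctured_nhds_neBot ℝ _ x2
    exact diam_pos (infinite_of_mem_nhds x2 (hTo.mem_nhds hx2)).nontrivial hTb
  obtain ⟨L, c, hLc⟩ := exists_affine_equiv b b'
  rw [← hTb', ← hT'] at hLc
  obtain ⟨u, hu, huv⟩ := exists_global_smooth isClosed_closure hV hTV hv
  obtain ⟨r2, ⟨x3, hx3⟩, hr2⟩ := exists_lt_of_lt_csSup (b := ϱ / 2 * diam T)
    (s := {r : ℝ | ∃ x, ball x r ⊆ T}) ⟨0, 0, by simp⟩ (by nlinarith [mul_pos hϱ hpos])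
  have hr20 : 0 < r2 := lt_trans (by positivity) hr2
  have hL1 : ‖(L : EN (n + 1) →L[ℝ] EN (n + 1))‖ ≤ α * diam T := by
    have := opNorm_le_of_ball_image (L : EN (n + 1) →L[ℝ] EN (n + 1)) c hr1 hball1 hTb
      (fun x hx => by rw [hLc]; exact ⟨x, hx, rfl⟩)
    refine this.trans (le_of_eq ?_)
    rw [hα]; ring
  have hL2 : ‖(L.symm : EN (n + 1) →L[ℝ] EN (n + 1))‖ ≤ β * (diam T)⁻¹ := by
    have := opNorm_le_of_ball_image (L.symm : EN (n + 1) →L[ℝ] EN (n + 1)) (-L.symm c) hr20 hx3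
      (hbdd b) (fun x hx => by
        rw [hLc] at hx
        obtain ⟨y, hy, rfl⟩ := hx
        simpa using hy)
    refine this.trans ?_
    have hd := diam_nonneg (s := T')
    calc 2 * diam T' / r2 ≤ 2 * diam T' / (ϱ / 2 * diam T) := by gcongr
      _ = _ := by rw [hβ]; field_simp
  set H := ENNReal.ofReal (diam T) with hH
  have hH0 : H ≠ 0 := by simpa [hH] using hpos
  have hHt : H ≠ ⊤ := ENNReal.ofReal_ne_top
  have hL1e : ‖(L : EN (n + 1) →L[ℝ] EN (n + 1))‖ₑ ≤ ENNReal.ofReal α * H := by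
    rw [← ofReal_norm, hH, ← ENNReal.ofReal_mul hα0]
    exact ENNReal.ofReal_le_ofReal hL1
  have hL2e : ‖(L.symm : EN (n + 1) →L[ℝ] EN (n + 1))‖ₑ ≤ ENNReal.ofReal β * H⁻¹ := by
    rw [← ofReal_norm, hH, ← ENNReal.ofReal_inv_of_pos hpos, ← ENNReal.ofReal_mul hβ0]
    exact ENNReal.ofReal_le_ofReal hL2
  have main := htr L c T hLc u hu P hP (by
    intro r hr
    rw [hPv r hr]
    refine setIntegral_congr_fun hTo.measurableSet fun x hx => ?_
    rw [(huv x (subset_closure hx)).self_of_nhds])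
  have e1 : ∫⁻ x in frontier T, ‖iteratedFDeriv ℝ m (fun y => v y - P y) x‖ₑ ^ q ∂μH[(n : ℝ)] =
      ∫⁻ x in frontier T, ‖iteratedFDeriv ℝ m (fun y => u y - P y) x‖ₑ ^ q ∂μH[(n : ℝ)] := by
    refine setLIntegral_congr_fun isClosed_frontier.measurableSet fun x hx => ?_
    have h := huv x (frontier_subset_closure hx)
    have h2 : (fun y => v y - P y) =ᶠ[nhds x] (fun y => u y - P y) := by
      filter_upwards [h] with y hy
      rw [hy]
    rw [(h2.iteratedFDeriv ℝ m).self_of_nhds]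
  have e2 : ∫⁻ x in T, ‖iteratedFDeriv ℝ s v x‖ₑ ^ q =
      ∫⁻ x in T, ‖iteratedFDeriv ℝ s u x‖ₑ ^ q := by
    refine setLIntegral_congr_fun hTo.measurableSet fun x hx => ?_
    have h := huv x (subset_closure hx)
    rw [(h.iteratedFDeriv ℝ s).self_of_nhds]
  rw [e1, e2]
  set E := ∫⁻ x in T, ‖iteratedFDeriv ℝ s u x‖ₑ ^ q
  calc _ ≤ H * (C * ((ENNReal.ofReal α * H) ^ n * ((ENNReal.ofReal β * H⁻¹) ^ m) ^ q *
        ((ENNReal.ofReal α * H) ^ s) ^ q * (ENNReal.ofReal β * H⁻¹) ^ (n + 1)) * E) := by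
        refine mul_le_mul_right (main.trans ?_) _
        gcongr
    _ = C * (ENNReal.ofReal α ^ n * (ENNReal.ofReal β ^ m) ^ q * (ENNReal.ofReal α ^ s) ^ q *
          ENNReal.ofReal β ^ (n + 1)) *
          (H * (H ^ n * (H⁻¹ ^ m) ^ q * (H ^ s) ^ q * H⁻¹ ^ (n + 1))) * E := by
        simp only [mul_pow, ENNReal.mul_rpow_of_nonneg _ _ hq0]
        ring
    _ = _ := by rw [scaling_identity hH0 hHt hq (by omega)]

/-- Approximation properties of traces of $L^2$-projections on local polynomial spaces,
on nondegenerate simplices. -/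
theorem trace_approximation_of_l2_projection_simplex
    (N k : ℕ) (hN : 1 ≤ N) (s : ℕ) (hs : 1 ≤ s) (hsk : s ≤ k + 1)
    (p : ℝ≥0∞) (hp : 1 ≤ p) (hp' : p ≠ ⊤) (ϱ : ℝ) (hϱ : 0 < ϱ) :
    ∃ C : ℝ, 0 < C ∧
      ∀ (f : Fin (N + 1) → EuclideanSpace ℝ (Fin N)), AffineIndependent ℝ f →
      ∀ T : Set (EuclideanSpace ℝ (Fin N)),
        T = interior (convexHull ℝ (Set.range f)) →
        ϱ * Metric.diam T ≤ sSup {r : ℝ | ∃ x, Metric.ball x r ⊆ T} →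
      ∀ v : EuclideanSpace ℝ (Fin N) → ℝ,
        (∃ V, IsOpen V ∧ closure T ⊆ V ∧ ContDiffOn ℝ (⊤ : ℕ∞) v V) →
      ∀ P : EuclideanSpace ℝ (Fin N) → ℝ, IsPolyDegLE N k P →
        (∀ q : EuclideanSpace ℝ (Fin N) → ℝ, IsPolyDegLE N k q →
          ∫ x in T, P x * q x = ∫ x in T, v x * q x) →
      ∀ m : ℕ, m ≤ s - 1 →
        ENNReal.ofReal (Metric.diam T ^ (1 / p.toReal)) *
            eLpNorm (fun x => ‖iteratedFDeriv ℝ m (fun y => v y - P y) x‖) p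
              ((μH[(N : ℝ) - 1]).restrict (frontier T))
          ≤ ENNReal.ofReal (C * Metric.diam T ^ (s - m)) * sobSemi s p T v := by
  obtain ⟨n, rfl⟩ : ∃ n, N = n + 1 := ⟨N - 1, by omega⟩
  set q := p.toReal with hqdef
  have hp0 : p ≠ 0 := (lt_of_lt_of_le one_pos hp).ne'
  have hq : 1 ≤ q := by
    have := ENNReal.toReal_mono hp' hp
    simpa using this
  have hq0 : 0 < q := by linarith
  have hqi : 0 ≤ 1 / q := by positivity
  have hex : ∀ m : ℕ, ∃ K : ℝ≥0∞, K ≠ ⊤ ∧ (m + 1 ≤ s →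
      ∀ f : Fin (n + 1 + 1) → EN (n + 1), AffineIndependent ℝ f →
      ∀ T : Set (EN (n + 1)), T = interior (convexHull ℝ (Set.range f)) →
        ϱ * diam T ≤ sSup {r : ℝ | ∃ x, ball x r ⊆ T} →
      ∀ v : EN (n + 1) → ℝ,
        (∃ V, IsOpen V ∧ closure T ⊆ V ∧ ContDiffOn ℝ (⊤ : ℕ∞) v V) →
      ∀ P : EN (n + 1) → ℝ, IsPolyDegLE (n + 1) k P →
        (∀ r, IsPolyDegLE (n + 1) k r → ∫ x in T, P x * r x = ∫ x in T, v x * r x) →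
        ENNReal.ofReal (diam T) *
          ∫⁻ x in frontier T, ‖iteratedFDeriv ℝ m (fun y => v y - P y) x‖ₑ ^ q ∂μH[(n : ℝ)] ≤
          K * (ENNReal.ofReal (diam T) ^ (s - m)) ^ q *
            ∫⁻ x in T, ‖iteratedFDeriv ℝ s v x‖ₑ ^ q) := by
    intro m
    by_cases hm : m + 1 ≤ s
    · obtain ⟨K, hK, h⟩ := simplex_estimate n k s hsk hq hϱ m hm
      exact ⟨K, hK, fun _ => h⟩
    · exact ⟨0, by simp, fun h => absurd h hm⟩
  choose K hK hKb using hex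
  set KK : ℝ≥0∞ := ∑ m ∈ Finset.range s, K m with hKK
  have hKKt : KK ≠ ⊤ := ENNReal.sum_ne_top.2 fun m _ => hK m
  have hKq : KK ^ (1 / q) ≠ ⊤ := ENNReal.rpow_ne_top_of_nonneg hqi hKKt
  refine ⟨(KK ^ (1 / q)).toReal + 1, by positivity, ?_⟩
  intro f hf T hT hreg v hv P hP hPv m hm
  have hms : m + 1 ≤ s := by omega
  have main := hKb m hms f hf T hT hreg v hv P hP hPv
  have hKm : K m ≤ KK :=
    Finset.single_le_sum (f := K) (fun _ _ => zero_le) (Finset.mem_range.2 hms)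
  have hd : 0 ≤ diam T := diam_nonneg
  set H := ENNReal.ofReal (diam T) with hH
  have hN1 : (((n + 1 : ℕ) : ℝ) - 1) = (n : ℝ) := by push_cast; ring
  rw [hN1, sobSemi, eLpNorm_eq_lintegral_rpow_enorm_toReal hp0 hp',
    eLpNorm_eq_lintegral_rpow_enorm_toReal hp0 hp', ← hqdef]
  simp only [enorm_norm]
  rw [← ENNReal.ofReal_rpow_of_nonneg hd hqi, ENNReal.ofReal_mul (by positivity),
    ENNReal.ofReal_pow hd, ← hH, ← ENNReal.mul_rpow_of_nonneg _ _ hqi]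
  refine (ENNReal.rpow_le_rpow main hqi).trans ?_
  rw [ENNReal.mul_rpow_of_nonneg _ _ hqi, ENNReal.mul_rpow_of_nonneg _ _ hqi, ← ENNReal.rpow_mul,
    mul_one_div_cancel hq0.ne', ENNReal.rpow_one]
  gcongr
  calc K m ^ (1 / q) ≤ KK ^ (1 / q) := ENNReal.rpow_le_rpow hKm hqi
    _ = ENNReal.ofReal (KK ^ (1 / q)).toReal := (ENNReal.ofReal_toReal hKq).symm
    _ ≤ _ := ENNReal.ofReal_le_ofReal (by linarith)
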